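/- arXiv:2107.13768 — 5 statements merged into one kernel-verified Lean document; each statement's English description precedes it below -/
import Mathlib

section
/- Let κ > 0 and c > 2κ. Then there exists a function φ : ℝ → ℝ which is infinitely differentiable, even, strictly positive, strictly decreasing on (0,∞), tends to 0 at ±∞, and satisfies for every x ∈ ℝ the first-integral equation ½(c − φ(x))² φ'(x)² = φ(x)² ( ½φ(x)² − c φ(x) + (2/3)κ φ(x) + ½c² − κc ); moreover there is a constant C > 0 such that |φ(x)| ≤ C e^{−√(1 − 2κ/c) |x|} for all x ∈ ℝ. -/
open MeasureTheory Real Filter Finset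
open scoped ENNReal

noncomputable section

/-- The kernel `p(x) = ½ e^{-|x|}` of `(1 - ∂ₓ²)⁻¹` on `ℝ`. -/
def pker (x : ℝ) : ℝ := (1/2) * Real.exp (-|x|)

/-- The kernel `q(x) = ¼ e^{-2|x|}` of `(4 - ∂ₓ²)⁻¹` on `ℝ`. -/
def qker (x : ℝ) : ℝ := (1/4) * Real.exp (-(2*|x|))

/-- Convolution of two functions on `ℝ`. -/
def convol (f g : ℝ → ℝ) (x : ℝ) : ℝ := ∫ y, f (x - y) * g y

/-- `u` is a pointwise classical solution of the Degasperis-Procesi equation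
`∂ₜ u + ∂ₓ(½u² + p*((3/2)u² + 2κu)) = 0` for times `t ∈ T`. -/
def IsDPSolution (κ : ℝ) (T : Set ℝ) (u : ℝ → ℝ → ℝ) : Prop :=
  ∀ t ∈ T, ∀ x : ℝ,
    HasDerivAt (fun s => u s x)
      (-(deriv (fun y => (1/2) * (u t y)^2
          + convol pker (fun z => (3/2) * (u t z)^2 + 2*κ*(u t z)) y) x)) t

/-- The `c`-speed smooth solitary-wave profile of the DP equation:  even, smooth,
positive, strictly decreasing on `(0,∞)`, decaying at `±∞` and satisfying the
first-integral equation. -/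
structure IsSoliton (κ c : ℝ) (φ : ℝ → ℝ) : Prop where
  smooth : ContDiff ℝ (⊤ : ℕ∞) φ
  even : ∀ x, φ (-x) = φ x
  pos : ∀ x, 0 < φ x
  anti : StrictAntiOn φ (Set.Ioi 0)
  decay_top : Tendsto φ atTop (nhds 0)
  decay_bot : Tendsto φ atBot (nhds 0)
  eqn : ∀ x, (1/2)*(c - φ x)^2 * (deriv φ x)^2
      = (φ x)^2 * ((1/2)*(φ x)^2 - c * φ x + (2/3)*κ*(φ x) + (1/2)*c^2 - κ*c)

/-! The bracket in the first integral equals `½(a - φ)(b - φ)` with `0 < a < c` and `a < b`, and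
`ab = (μc)²` for `μ = √(1 - 2κ/c)`. In the variable `y` given by `dx = (2/μ)(1 - φ/c) dy` the
equation becomes `(dφ/dy)² = 4φ²(1 - φ/a)(1 - φ/b)`, which is solved by
`φ = a / (cosh² y - r² sinh² y)` with `r² = a/b`, so that `a = μrc` and `b = μc/r`. Integrating
`1 - φ/c` gives `x = 2(y/μ - artanh (r tanh y))`. This is a diffeomorphism of `ℝ` because
`φ ≤ a < c`, and it stays within bounded distance of `2y/μ`, so the decay `e^{-2|y|}` of `φ` in
`y` is the decay `e^{-μ|x|}` in `x`.
-/

lemma hasDerivAt_tanh (x : ℝ) : HasDerivAt tanh (cosh x ^ 2)⁻¹ x := by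
  have h := (hasDerivAt_sinh x).div (hasDerivAt_cosh x) (cosh_pos x).ne'
  rw [show tanh = fun y => sinh y / cosh y from funext tanh_eq_sinh_div_cosh]
  refine h.congr_deriv ?_
  rw [← one_div, ← cosh_sq_sub_sinh_sq x, sq (cosh x), sq (sinh x)]

lemma contDiff_tanh {n : WithTop ℕ∞} : ContDiff ℝ n tanh := by
  rw [show tanh = fun y => sinh y / cosh y from funext tanh_eq_sinh_div_cosh]
  exact contDiff_sinh.div contDiff_cosh fun x => (cosh_pos x).ne'

lemma artanh_eventuallyEq_half_log {x : ℝ} (hx : x ∈ Set.Ioo (-1) 1) :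
    artanh =ᶠ[nhds x] fun y => 1 / 2 * (log (1 + y) - log (1 - y)) := by
  filter_upwards [isOpen_Ioo.mem_nhds hx] with y hy
  rw [artanh_eq_half_log (Set.Ioo_subset_Icc_self hy),
    log_div (by linarith [hy.1]) (by linarith [hy.2])]

lemma hasDerivAt_artanh {x : ℝ} (hx : x ∈ Set.Ioo (-1) 1) :
    HasDerivAt artanh (1 - x ^ 2)⁻¹ x := by
  have hadd : 1 + x ≠ 0 := by linarith [hx.1]
  have hsub : 1 - x ≠ 0 := by linarith [hx.2]
  have hlog := ((((hasDerivAt_id x).const_add 1).log hadd).sub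
    (((hasDerivAt_id x).const_sub 1).log hsub)).const_mul (1 / 2)
  refine (hlog.congr_of_eventuallyEq (artanh_eventuallyEq_half_log hx)).congr_deriv ?_
  rw [show 1 - x ^ 2 = (1 + x) * (1 - x) by ring]
  simp only [id]
  field_simp
  ring

lemma contDiffAt_artanh {n : WithTop ℕ∞} {x : ℝ} (hx : x ∈ Set.Ioo (-1) 1) :
    ContDiffAt ℝ n artanh x := by
  have hadd : 1 + x ≠ 0 := by linarith [hx.1]
  have hsub : 1 - x ≠ 0 := by linarith [hx.2]
  exact (contDiffAt_const.mul (((contDiffAt_const.add contDiffAt_id).log hadd).sub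
    ((contDiffAt_const.sub contDiffAt_id).log hsub))).congr_of_eventuallyEq
      (artanh_eventuallyEq_half_log hx)

lemma odd_artanh : Function.Odd artanh := fun x => by
  rw [artanh, artanh, ← log_inv, ← sqrt_inv, inv_div, sub_neg_eq_add, ← sub_eq_add_neg]

lemma abs_artanh_le_artanh {x r : ℝ} (hr : r < 1) (hx : |x| ≤ r) : |artanh x| ≤ artanh r := by
  obtain ⟨hneg, hpos⟩ := abs_le.1 hx
  rw [abs_le, ← odd_artanh]
  exact ⟨artanh_le_artanh (by linarith) (by linarith) hneg,
    artanh_le_artanh (by linarith) hr hpos⟩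

lemma surjective_of_abs_sub_mul_le {f : ℝ → ℝ} (hf : Continuous f) {k K : ℝ} (hk : 0 < k)
    (hfk : ∀ y, |f y - k * y| ≤ K) : Function.Surjective f := by
  apply hf.surjective
  · refine tendsto_atTop_mono (f := fun y => k * y + -K) (fun y => ?_) ?_
    · linarith [(abs_le.1 (hfk y)).1]
    · exact tendsto_atTop_add_const_right _ _ (tendsto_id.const_mul_atTop hk)
  · refine tendsto_atBot_mono (f := fun y => k * y + K) (fun y => ?_) ?_
    · linarith [(abs_le.1 (hfk y)).2]
    · exact tendsto_atBot_add_const_right _ _ (tendsto_id.const_mul_atBot hk)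

lemma tendsto_cocompact_zero_of_norm_le_mul_exp {E F : Type*} [NormedAddCommGroup E]
    [ProperSpace E] [NormedAddCommGroup F] {f : E → F} {C μ : ℝ} (hμ : 0 < μ)
    (hf : ∀ x, ‖f x‖ ≤ C * exp (-μ * ‖x‖)) : Tendsto f (cocompact E) (nhds 0) := by
  refine squeeze_zero_norm hf ?_
  have hexponent : Tendsto (fun x : E => -μ * ‖x‖) (cocompact E) atBot :=
    tendsto_norm_cocompact_atTop.const_mul_atTop_of_neg (neg_neg_of_pos hμ)
  simpa using (tendsto_exp_atBot.comp hexponent).const_mul C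

/-- The solution `w(y) = 1 / (cosh² y - r² sinh² y)` of `w'² = 4w²(1 - w)(1 - r²w)` with
`w(0) = 1`: the solitary wave normalised to height `1`, in the desingularising variable `y`. -/
def solitonPulse (r y : ℝ) : ℝ := (cosh y ^ 2 - r ^ 2 * sinh y ^ 2)⁻¹

/-- The position `x(y) = 2(y/μ - artanh (r tanh y))` of the point of the wave with parameter `y`:
the odd primitive of `(2/μ)(1 - μ r w(y))`, where `w` is `solitonPulse r`. -/
def solitonPosition (μ r y : ℝ) : ℝ := 2 * (y / μ - artanh (r * tanh y))

section Pulse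

variable {r : ℝ}

lemma solitonPulse_neg (r y : ℝ) : solitonPulse r (-y) = solitonPulse r y := by
  simp only [solitonPulse, cosh_neg, sinh_neg, neg_sq]

lemma cosh_sq_sub_mul_sinh_sq_pos (hr : |r| < 1) (y : ℝ) :
    0 < cosh y ^ 2 - r ^ 2 * sinh y ^ 2 := by
  have hr2 : r ^ 2 < 1 := (sq_lt_one_iff_abs_lt_one r).2 hr
  nlinarith [cosh_sq y, sq_nonneg (sinh y)]

lemma solitonPulse_pos (hr : |r| < 1) (y : ℝ) : 0 < solitonPulse r y :=
  inv_pos.2 (cosh_sq_sub_mul_sinh_sq_pos hr y)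

lemma one_sub_solitonPulse (hr : |r| < 1) (y : ℝ) :
    1 - solitonPulse r y = (1 - r ^ 2) * sinh y ^ 2 * solitonPulse r y := by
  have hne := (cosh_sq_sub_mul_sinh_sq_pos hr y).ne'
  rw [solitonPulse]
  field_simp
  linear_combination cosh_sq y

lemma one_sub_sq_mul_solitonPulse (hr : |r| < 1) (y : ℝ) :
    1 - r ^ 2 * solitonPulse r y = (1 - r ^ 2) * cosh y ^ 2 * solitonPulse r y := by
  have hne := (cosh_sq_sub_mul_sinh_sq_pos hr y).ne'
  rw [solitonPulse]
  field_simp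
  linear_combination r ^ 2 * cosh_sq y

lemma solitonPulse_le_one (hr : |r| < 1) (y : ℝ) : solitonPulse r y ≤ 1 := by
  have hr2 : 0 < 1 - r ^ 2 := sub_pos.2 ((sq_lt_one_iff_abs_lt_one r).2 hr)
  have hw := solitonPulse_pos hr y
  rw [← sub_nonneg, one_sub_solitonPulse hr]
  positivity

lemma contDiff_solitonPulse {n : WithTop ℕ∞} (hr : |r| < 1) : ContDiff ℝ n (solitonPulse r) :=
  ((contDiff_cosh.pow 2).sub (contDiff_const.mul (contDiff_sinh.pow 2))).inv
    fun y => (cosh_sq_sub_mul_sinh_sq_pos hr y).ne'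

lemma hasDerivAt_solitonPulse (hr : |r| < 1) (y : ℝ) :
    HasDerivAt (solitonPulse r)
      (-(2 * (1 - r ^ 2) * sinh y * cosh y) * solitonPulse r y ^ 2) y := by
  have hdenom := (((hasDerivAt_cosh y).pow 2).sub (((hasDerivAt_sinh y).pow 2).const_mul (r ^ 2)))
  refine (hdenom.inv (cosh_sq_sub_mul_sinh_sq_pos hr y).ne').congr_deriv ?_
  simp only [solitonPulse, Pi.sub_apply, Pi.pow_apply, Nat.cast_ofNat, inv_pow, ← div_eq_mul_inv]
  congr 1
  ring

lemma deriv_solitonPulse_sq (hr : |r| < 1) (y : ℝ) :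
    deriv (solitonPulse r) y ^ 2 =
      4 * solitonPulse r y ^ 2 * (1 - solitonPulse r y) * (1 - r ^ 2 * solitonPulse r y) := by
  rw [(hasDerivAt_solitonPulse hr y).deriv, one_sub_solitonPulse hr,
    one_sub_sq_mul_solitonPulse hr]
  ring

lemma strictAntiOn_solitonPulse (hr : |r| < 1) : StrictAntiOn (solitonPulse r) (Set.Ici 0) := by
  have hr2 : 0 < 1 - r ^ 2 := sub_pos.2 ((sq_lt_one_iff_abs_lt_one r).2 hr)
  refine strictAntiOn_of_deriv_neg (convex_Ici 0)
    (contDiff_solitonPulse hr (n := 0)).continuous.continuousOn fun y hy => ?_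
  rw [interior_Ici] at hy
  have hsinh : 0 < sinh y := sinh_pos_iff.2 hy
  have hw := solitonPulse_pos hr y
  rw [(hasDerivAt_solitonPulse hr y).deriv, neg_mul, neg_lt_zero]
  positivity

lemma solitonPulse_le_mul_exp (hr : |r| < 1) (y : ℝ) :
    solitonPulse r y ≤ 4 / (1 - r ^ 2) * exp (-(2 * |y|)) := by
  have hr2 : 0 < 1 - r ^ 2 := sub_pos.2 ((sq_lt_one_iff_abs_lt_one r).2 hr)
  have hcosh : exp |y| ≤ 2 * cosh y := by
    rw [cosh_eq]
    linarith [exp_abs_le y]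
  have hdenom : (1 - r ^ 2) / 4 * exp (2 * |y|) ≤ cosh y ^ 2 - r ^ 2 * sinh y ^ 2 :=
    calc (1 - r ^ 2) / 4 * exp (2 * |y|) = (1 - r ^ 2) / 4 * exp |y| ^ 2 := by
          rw [← exp_nat_mul, Nat.cast_ofNat]
      _ ≤ (1 - r ^ 2) / 4 * (2 * cosh y) ^ 2 := by gcongr
      _ = (1 - r ^ 2) * cosh y ^ 2 := by ring
      _ ≤ cosh y ^ 2 - r ^ 2 * sinh y ^ 2 := by nlinarith [cosh_sq y, sq_nonneg r]
  calc solitonPulse r y ≤ ((1 - r ^ 2) / 4 * exp (2 * |y|))⁻¹ := inv_anti₀ (by positivity) hdenom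
    _ = 4 / (1 - r ^ 2) * exp (-(2 * |y|)) := by rw [mul_inv, inv_div, exp_neg]

end Pulse

section Position

variable {μ r : ℝ}

lemma abs_mul_tanh_le (r y : ℝ) : |r * tanh y| ≤ |r| := by
  rw [abs_mul]
  exact mul_le_of_le_one_right (abs_nonneg r) (abs_tanh_lt_one y).le

lemma mul_tanh_mem_Ioo (hr : |r| < 1) (y : ℝ) : r * tanh y ∈ Set.Ioo (-1) 1 :=
  abs_lt.1 ((abs_mul_tanh_le r y).trans_lt hr)

lemma odd_solitonPosition (μ r : ℝ) : Function.Odd (solitonPosition μ r) := fun y => by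
  rw [solitonPosition, solitonPosition, tanh_neg, mul_neg, odd_artanh]
  ring

lemma abs_solitonPosition_sub_le (hr : |r| < 1) (y : ℝ) :
    |solitonPosition μ r y - 2 / μ * y| ≤ 2 * artanh |r| := by
  have hdiff : solitonPosition μ r y - 2 / μ * y = -(2 * artanh (r * tanh y)) := by
    rw [solitonPosition]
    ring
  rw [hdiff, abs_neg, abs_mul, abs_two]
  gcongr
  exact abs_artanh_le_artanh hr (abs_mul_tanh_le r y)

lemma contDiff_solitonPosition {n : WithTop ℕ∞} (hr : |r| < 1) :
    ContDiff ℝ n (solitonPosition μ r) := by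
  have hartanh : ContDiff ℝ n fun y => artanh (r * tanh y) := contDiff_iff_contDiffAt.2 fun y =>
    (contDiffAt_artanh (mul_tanh_mem_Ioo hr y)).comp (f := fun y => r * tanh y) y
      (contDiff_const.mul contDiff_tanh).contDiffAt
  exact contDiff_const.mul ((contDiff_id.div_const μ).sub hartanh)

lemma hasDerivAt_artanh_mul_tanh (hr : |r| < 1) (y : ℝ) :
    HasDerivAt (fun y => artanh (r * tanh y)) (r * solitonPulse r y) y := by
  refine ((hasDerivAt_artanh (mul_tanh_mem_Ioo hr y)).comp y
    ((hasDerivAt_tanh y).const_mul r)).congr_deriv ?_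
  have hcosh := (cosh_pos y).ne'
  rw [mul_left_comm, ← mul_inv, solitonPulse, tanh_eq_sinh_div_cosh]
  congr 2
  field_simp

lemma hasDerivAt_solitonPosition (hμ : μ ≠ 0) (hr : |r| < 1) (y : ℝ) :
    HasDerivAt (solitonPosition μ r) (2 / μ * (1 - μ * r * solitonPulse r y)) y := by
  refine ((((hasDerivAt_id y).div_const μ).sub
    (hasDerivAt_artanh_mul_tanh hr y)).const_mul 2).congr_deriv ?_
  field_simp

lemma one_sub_mul_solitonPulse_pos (hr : |r| < 1) (hμr : μ * r < 1) (y : ℝ) :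
    0 < 1 - μ * r * solitonPulse r y := by
  nlinarith [solitonPulse_pos hr y, solitonPulse_le_one hr y]

lemma solitonPosition_deriv_pos (hμ : 0 < μ) (hr : |r| < 1) (hμr : μ * r < 1) (y : ℝ) :
    0 < 2 / μ * (1 - μ * r * solitonPulse r y) :=
  mul_pos (div_pos two_pos hμ) (one_sub_mul_solitonPulse_pos hr hμr y)

lemma strictMono_solitonPosition (hμ : 0 < μ) (hr : |r| < 1) (hμr : μ * r < 1) :
    StrictMono (solitonPosition μ r) :=
  strictMono_of_deriv_pos fun y => by
    rw [(hasDerivAt_solitonPosition hμ.ne' hr y).deriv]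
    exact solitonPosition_deriv_pos hμ hr hμr y

lemma surjective_solitonPosition (hμ : 0 < μ) (hr : |r| < 1) :
    Function.Surjective (solitonPosition μ r) :=
  surjective_of_abs_sub_mul_le (contDiff_solitonPosition hr (n := 0)).continuous
    (div_pos two_pos hμ) (abs_solitonPosition_sub_le hr)

end Position

section Parameter

variable {μ r : ℝ} (hμ : 0 < μ) (hr : |r| < 1) (hμr : μ * r < 1)

/-- The inverse `x ↦ y` of the position function `solitonPosition μ r`. -/
def solitonParameter : ℝ ≃o ℝ :=
  ((strictMono_solitonPosition hμ hr hμr).orderIsoOfSurjective _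
    (surjective_solitonPosition hμ hr)).symm

lemma solitonPosition_solitonParameter (x : ℝ) :
    solitonPosition μ r (solitonParameter hμ hr hμr x) = x :=
  (solitonParameter hμ hr hμr).symm_apply_apply x

lemma odd_solitonParameter : Function.Odd (solitonParameter hμ hr hμr) := fun x => by
  apply (strictMono_solitonPosition hμ hr hμr).injective
  rw [odd_solitonPosition, solitonPosition_solitonParameter, solitonPosition_solitonParameter]

lemma contDiff_solitonParameter {n : WithTop ℕ∞} : ContDiff ℝ n (solitonParameter hμ hr hμr) :=
  (solitonParameter hμ hr hμr).symm.toHomeomorph.contDiff_symm_deriv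
    (fun y => (solitonPosition_deriv_pos hμ hr hμr y).ne')
    (fun y => hasDerivAt_solitonPosition hμ.ne' hr y) (contDiff_solitonPosition hr)

lemma hasDerivAt_solitonParameter (x : ℝ) :
    HasDerivAt (solitonParameter hμ hr hμr)
      (2 / μ * (1 - μ * r * solitonPulse r (solitonParameter hμ hr hμr x)))⁻¹ x :=
  HasDerivAt.of_local_left_inverse (solitonParameter hμ hr hμr).continuous.continuousAt
    (hasDerivAt_solitonPosition hμ.ne' hr _) (solitonPosition_deriv_pos hμ hr hμr _).ne'
    (Eventually.of_forall (solitonPosition_solitonParameter hμ hr hμr))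

lemma mul_abs_sub_le_two_mul_abs_solitonParameter (x : ℝ) :
    μ * |x| - 2 * μ * artanh |r| ≤ 2 * |solitonParameter hμ hr hμr x| := by
  set y := solitonParameter hμ hr hμr x
  have hxy : |x - 2 / μ * y| ≤ 2 * artanh |r| := by
    rw [← solitonPosition_solitonParameter hμ hr hμr x]
    exact abs_solitonPosition_sub_le hr y
  have htriangle : |x| ≤ 2 * artanh |r| + 2 / μ * |y| := by
    have := abs_sub_abs_le_abs_sub x (2 / μ * y)
    rw [abs_mul, abs_of_pos (div_pos two_pos hμ)] at this
    linarith
  calc μ * |x| - 2 * μ * artanh |r|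
      ≤ μ * (2 * artanh |r| + 2 / μ * |y|) - 2 * μ * artanh |r| := by gcongr
    _ = 2 * |y| := by
      field_simp
      ring

end Parameter

section Profile

variable {μ r c : ℝ} (hμ : 0 < μ) (hr : |r| < 1) (hμr : μ * r < 1)

/-- The solitary-wave profile of speed `c`, height `μrc` and decay rate `μ`, as a function of the
position `x`. -/
def solitonProfile (c : ℝ) (x : ℝ) : ℝ :=
  μ * r * c * solitonPulse r (solitonParameter hμ hr hμr x)

lemma contDiff_solitonProfile {n : WithTop ℕ∞} : ContDiff ℝ n (solitonProfile hμ hr hμr c) :=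
  contDiff_const.mul ((contDiff_solitonPulse hr).comp (contDiff_solitonParameter hμ hr hμr))

lemma even_solitonProfile : Function.Even (solitonProfile hμ hr hμr c) := fun x => by
  rw [solitonProfile, solitonProfile, odd_solitonParameter, solitonPulse_neg]

lemma solitonProfile_pos (hr₀ : 0 < r) (hc : 0 < c) (x : ℝ) : 0 < solitonProfile hμ hr hμr c x :=
  mul_pos (by positivity) (solitonPulse_pos hr _)

lemma strictAntiOn_solitonProfile (hr₀ : 0 < r) (hc : 0 < c) :
    StrictAntiOn (solitonProfile hμ hr hμr c) (Set.Ici 0) := by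
  have hparam : ∀ x ∈ Set.Ici (0 : ℝ), solitonParameter hμ hr hμr x ∈ Set.Ici 0 := fun x hx => by
    rw [Set.mem_Ici, ← (odd_solitonParameter hμ hr hμr).map_zero]
    exact (solitonParameter hμ hr hμr).monotone hx
  intro x hx y hy hxy
  exact mul_lt_mul_of_pos_left (strictAntiOn_solitonPulse hr (hparam x hx) (hparam y hy)
    ((solitonParameter hμ hr hμr).strictMono hxy)) (by positivity)

lemma sub_mul_deriv_solitonProfile (x : ℝ) :
    (c - solitonProfile hμ hr hμr c x) * deriv (solitonProfile hμ hr hμr c) x =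
      μ ^ 2 * r * c ^ 2 / 2 * deriv (solitonPulse r) (solitonParameter hμ hr hμr x) := by
  have hpulse := (contDiff_solitonPulse hr (n := 1)).differentiable one_ne_zero
  have hderiv := (((hpulse _).hasDerivAt.comp x
    (hasDerivAt_solitonParameter hμ hr hμr x)).const_mul (μ * r * c)).deriv
  rw [show deriv (solitonProfile hμ hr hμr c) x = _ from hderiv, solitonProfile]
  set w := solitonPulse r (solitonParameter hμ hr hμr x)
  have hne : 1 - μ * r * w ≠ 0 := (one_sub_mul_solitonPulse_pos hr hμr _).ne'
  field_simp

lemma sub_sq_mul_deriv_solitonProfile_sq (hr₀ : r ≠ 0) (x : ℝ) :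
    (c - solitonProfile hμ hr hμr c x) ^ 2 * deriv (solitonProfile hμ hr hμr c) x ^ 2 =
      solitonProfile hμ hr hμr c x ^ 2 * ((μ * r * c - solitonProfile hμ hr hμr c x) *
        (μ * c / r - solitonProfile hμ hr hμr c x)) := by
  rw [← mul_pow, sub_mul_deriv_solitonProfile, mul_pow, deriv_solitonPulse_sq hr, solitonProfile]
  field_simp
  ring

lemma abs_solitonProfile_le (x : ℝ) :
    |solitonProfile hμ hr hμr c x| ≤
      |μ * r * c| * (4 / (1 - r ^ 2)) * exp (2 * μ * artanh |r|) * exp (-μ * |x|) := by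
  have hr2 : 0 < 1 - r ^ 2 := sub_pos.2 ((sq_lt_one_iff_abs_lt_one r).2 hr)
  set y := solitonParameter hμ hr hμr x
  have hexponent : -(2 * |y|) ≤ 2 * μ * artanh |r| + -μ * |x| := by
    linarith [mul_abs_sub_le_two_mul_abs_solitonParameter hμ hr hμr x]
  calc |solitonProfile hμ hr hμr c x| = |μ * r * c| * solitonPulse r y := by
        rw [solitonProfile, abs_mul, abs_of_pos (solitonPulse_pos hr y)]
    _ ≤ |μ * r * c| * (4 / (1 - r ^ 2) * exp (-(2 * |y|))) := by
        gcongr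
        exact solitonPulse_le_mul_exp hr y
    _ ≤ |μ * r * c| * (4 / (1 - r ^ 2) * exp (2 * μ * artanh |r| + -μ * |x|)) := by gcongr
    _ = _ := by
        rw [exp_add]
        ring

end Profile

lemma exists_add_inv_eq_two_mul {t : ℝ} (ht : 1 < t) : ∃ r ∈ Set.Ioo 0 1, r + r⁻¹ = 2 * t := by
  refine ⟨exp (-arcosh t), ⟨exp_pos _, exp_lt_one_iff.2 (neg_neg_of_pos (arcosh_pos ht))⟩, ?_⟩
  rw [← exp_neg, neg_neg, ← cosh_arcosh ht.le, arcosh_cosh (arcosh_nonneg ht.le), cosh_eq]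
  ring

section DegasperisProcesi

variable {κ c : ℝ}

lemma sqrt_one_sub_div_mem_Ioo (hκ : 0 < κ) (hc : 2 * κ < c) :
    √(1 - 2 * κ / c) ∈ Set.Ioo 0 1 := by
  have hc₀ : 0 < c := by linarith
  have hratio : 2 * κ / c < 1 := (div_lt_one hc₀).2 hc
  have hratio₀ : 0 < 2 * κ / c := by positivity
  exact ⟨sqrt_pos.2 (by linarith), (sqrt_lt' one_pos).2 (by linarith)⟩

lemma exists_firstIntegral_factorization (hκ : 0 < κ) (hc : 2 * κ < c) :
    ∃ r ∈ Set.Ioo 0 1, ∀ φ : ℝ,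
      1 / 2 * φ ^ 2 - c * φ + 2 / 3 * κ * φ + 1 / 2 * c ^ 2 - κ * c =
        1 / 2 * ((√(1 - 2 * κ / c) * r * c - φ) * (√(1 - 2 * κ / c) * c / r - φ)) := by
  have hc₀ : 0 < c := by linarith
  have hμ := (sqrt_one_sub_div_mem_Ioo hκ hc).1
  have hμc : (√(1 - 2 * κ / c) * c) ^ 2 = c ^ 2 - 2 * κ * c := by
    rw [mul_pow, sq_sqrt (sqrt_pos.1 hμ).le]
    field_simp
  set μ := √(1 - 2 * κ / c)
  have ht : 1 < (c - 2 * κ / 3) / (μ * c) := by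
    rw [one_lt_div (by positivity)]
    refine lt_of_pow_lt_pow_left₀ 2 (by linarith) ?_
    rw [hμc]
    nlinarith
  obtain ⟨r, hr, hsum⟩ := exists_add_inv_eq_two_mul ht
  refine ⟨r, hr, fun φ => ?_⟩
  have hr₀ : r ≠ 0 := hr.1.ne'
  have hroots_add : μ * r * c + μ * c / r = 2 * c - 4 * κ / 3 := by
    calc μ * r * c + μ * c / r = μ * c * (r + r⁻¹) := by ring
      _ = 2 * c - 4 * κ / 3 := by
        rw [hsum]
        field_simp
        ring
  have hroots_mul : (μ * r * c) * (μ * c / r) = c ^ 2 - 2 * κ * c := by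
    rw [← hμc]
    field_simp
  linear_combination φ / 2 * hroots_add - 1 / 2 * hroots_mul

lemma isSoliton_solitonProfile {μ r : ℝ} (hμ : 0 < μ) (hr : |r| < 1) (hμr : μ * r < 1)
    (hr₀ : 0 < r) (hc : 0 < c)
    (hfactor : ∀ φ : ℝ, 1 / 2 * φ ^ 2 - c * φ + 2 / 3 * κ * φ + 1 / 2 * c ^ 2 - κ * c =
      1 / 2 * ((μ * r * c - φ) * (μ * c / r - φ))) :
    IsSoliton κ c (solitonProfile hμ hr hμr c) := by
  have hlim : Tendsto (solitonProfile hμ hr hμr c) (cocompact ℝ) (nhds 0) :=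
    tendsto_cocompact_zero_of_norm_le_mul_exp hμ (abs_solitonProfile_le hμ hr hμr)
  exact
    { smooth := contDiff_solitonProfile hμ hr hμr
      even := even_solitonProfile hμ hr hμr
      pos := solitonProfile_pos hμ hr hμr hr₀ hc
      anti := (strictAntiOn_solitonProfile hμ hr hμr hr₀ hc).mono Set.Ioi_subset_Ici_self
      decay_top := hlim.mono_left atTop_le_cocompact
      decay_bot := hlim.mono_left atBot_le_cocompact
      eqn := fun x => by
        rw [hfactor]
        linear_combination 1 / 2 * sub_sq_mul_deriv_solitonProfile_sq hμ hr hμr hr₀.ne' x }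

end DegasperisProcesi

/-- existence of a smooth solitary-wave profile for the DP equation,
with exponential decay rate `e^{-√(1-2κ/c)|x|}`. -/
theorem stmt_0 (κ c : ℝ) (hκ : 0 < κ) (hc : 2*κ < c) :
    ∃ φ : ℝ → ℝ,
      ContDiff ℝ (⊤ : ℕ∞) φ ∧ (∀ x, φ (-x) = φ x) ∧ (∀ x, 0 < φ x) ∧
      StrictAntiOn φ (Set.Ioi 0) ∧
      Tendsto φ atTop (nhds 0) ∧ Tendsto φ atBot (nhds 0) ∧
      (∀ x : ℝ, (1/2)*(c - φ x)^2 * (deriv φ x)^2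
        = (φ x)^2 * ((1/2)*(φ x)^2 - c * φ x + (2/3)*κ*(φ x) + (1/2)*c^2 - κ*c)) ∧
      ∃ C > 0, ∀ x : ℝ, |φ x| ≤ C * Real.exp (-(Real.sqrt (1 - 2*κ/c)) * |x|) := by
  have hc₀ : 0 < c := by linarith
  obtain ⟨hμ, hμ1⟩ := sqrt_one_sub_div_mem_Ioo hκ hc
  obtain ⟨r, ⟨hr₀, hr1⟩, hfactor⟩ := exists_firstIntegral_factorization hκ hc
  have hr : |r| < 1 := abs_lt.2 ⟨by linarith, hr1⟩
  have hμr := mul_lt_one_of_nonneg_of_lt_one_left hμ.le hμ1 hr1.le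
  have hr2 : 0 < 1 - r ^ 2 := sub_pos.2 ((sq_lt_one_iff_abs_lt_one r).2 hr)
  have hφ := isSoliton_solitonProfile hμ hr hμr hr₀ hc₀ hfactor
  exact ⟨_, hφ.smooth, hφ.even, hφ.pos, hφ.anti, hφ.decay_top, hφ.decay_bot, hφ.eqn, _,
    by positivity, abs_solitonProfile_le hμ hr hμr⟩
end
end

section
/- Let κ ≥ 0. Let u ∈ C¹(ℝ) ∩ L²(ℝ) satisfy |u'(x)| ≤ |u(x) + (2/3)κ| for every x ∈ ℝ, let f ∈ W^{1,∞}(ℝ) ∩ L²(ℝ), and set g = u − f. Then ‖g‖_{L^∞(ℝ)} ≤ ‖g‖_{L²(ℝ)}^{2/3} ( 1 + (4/3)κ + √2 ‖g‖_{L²(ℝ)}^{2/3} + 2‖f‖_{L^∞(ℝ)} + 2‖f'‖_{L^∞(ℝ)} ). -/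
open MeasureTheory Real Filter Finset
open scoped ENNReal

noncomputable section

/-! An integrable function `h` on the line with integrable derivative satisfies `2|h| ≤ ∫ |h'|`.
Applied to `h = ‖g‖ ^ (p + 1)` this interpolates between `Lᵖ` and Lipschitz bounds:
`2 ‖g‖_∞ ^ (p + 1) ≤ (p + 1) ‖g'‖_∞ ∫ ‖g‖ ^ p`.
A function `g` in `Lᵖ` with `‖g'‖ ≤ ‖g‖ + A` is bounded, so that `‖g'‖_∞ ≤ ‖g‖_∞ + A` may be
inserted. For `p = 2` and `n = ‖g‖_{L²} ^ (2/3)` the result is the cubic inequality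
`2 ‖g‖_∞ ^ 3 ≤ 3 n ^ 3 (‖g‖_∞ + A)`, which forces `‖g‖_∞ ≤ n (1 + A / 2 + 3 n / 4)`.
For `g = u - f` with `‖u'‖ ≤ ‖u + c‖` one can take `A = ‖c‖ + ‖f‖_∞ + ‖f'‖_∞`. -/

section Interpolation

variable {E : Type*} [NormedAddCommGroup E]

lemma two_mul_norm_le_integral_of_norm_deriv_le [NormedSpace ℝ E] [CompleteSpace E]
    {h : ℝ → E} {b : ℝ → ℝ} (hdiff : Differentiable ℝ h) (hint : Integrable h)
    (hb : Integrable b) (hbound : ∀ᵐ x, ‖deriv h x‖ ≤ b x) (x : ℝ) :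
    2 * ‖h x‖ ≤ ∫ y, b y := by
  have hderiv (y : ℝ) : HasDerivAt h (deriv h y) y := (hdiff y).hasDerivAt
  have hdint : Integrable (deriv h) := hb.mono' (aestronglyMeasurable_deriv h volume) hbound
  have hleft : ‖h x‖ ≤ ∫ y in Set.Iic x, b y := by
    have hlim : Tendsto h atBot (nhds 0) :=
      tendsto_zero_of_hasDerivAt_of_integrableOn_Iic (a := x)
        (fun y _ => hderiv y) hdint.integrableOn hint.integrableOn
    have hFTC : ∫ y in Set.Iic x, deriv h y = h x := by
      simpa only [sub_zero] using integral_Iic_of_hasDerivAt_of_tendsto'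
        (fun y _ => hderiv y) hdint.integrableOn hlim
    exact hFTC ▸ norm_integral_le_of_norm_le hb.integrableOn (ae_restrict_of_ae hbound)
  have hright : ‖h x‖ ≤ ∫ y in Set.Ioi x, b y := by
    have hlim : Tendsto h atTop (nhds 0) :=
      tendsto_zero_of_hasDerivAt_of_integrableOn_Ioi (a := x)
        (fun y _ => hderiv y) hdint.integrableOn hint.integrableOn
    have hFTC : ∫ y in Set.Ioi x, deriv h y = -h x := by
      simpa only [zero_sub] using integral_Ioi_of_hasDerivAt_of_tendsto'
        (fun y _ => hderiv y) hdint.integrableOn hlim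
    rw [← norm_neg, ← hFTC]
    exact norm_integral_le_of_norm_le hb.integrableOn (ae_restrict_of_ae hbound)
  rw [← intervalIntegral.integral_Iic_add_Ioi hb.integrableOn hb.integrableOn (b := x)]
  linarith

/-- A smoothed power, comparable to `t ^ p` for `t ≥ 0`. Its derivative is at most
`p (1 + A) t ^ p / (t + A)`, so that for `‖g'‖ ≤ ‖g‖ + A` its composition with `‖g‖` has derivative
dominated by `‖g‖ ^ p`. -/
def smoothedPow (p t : ℝ) : ℝ := (1 + t ^ (p + 1)) ^ (p / (p + 1)) - 1

variable {p A t : ℝ}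

lemma smoothedPow_nonneg (hp : 0 ≤ p) (ht : 0 ≤ t) : 0 ≤ smoothedPow p t :=
  sub_nonneg.2 (Real.one_le_rpow (le_add_of_nonneg_right (by positivity)) (by positivity))

lemma rpow_add_one_rpow_div (hp : 0 ≤ p) (ht : 0 ≤ t) :
    (t ^ (p + 1)) ^ (p / (p + 1)) = t ^ p := by
  rw [← Real.rpow_mul ht, mul_div_cancel₀ _ (by positivity)]

lemma smoothedPow_le_rpow (hp : 0 ≤ p) (ht : 0 ≤ t) : smoothedPow p t ≤ t ^ p := by
  have hsub := Real.rpow_add_le_add_rpow zero_le_one (Real.rpow_nonneg ht (p + 1))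
    (p := p / (p + 1)) (by positivity) ((div_le_one (by positivity)).2 (by linarith))
  rw [rpow_add_one_rpow_div hp ht, Real.one_rpow] at hsub
  exact sub_le_iff_le_add'.2 hsub

lemma rpow_le_one_add_smoothedPow (hp : 0 ≤ p) (ht : 0 ≤ t) : t ^ p ≤ 1 + smoothedPow p t := by
  rw [smoothedPow, add_sub_cancel, ← rpow_add_one_rpow_div hp ht]
  gcongr
  exact le_add_of_nonneg_left zero_le_one

lemma add_mul_one_add_rpow_rpow_le (hp : 0 ≤ p) (hA : 0 ≤ A) (ht : 0 ≤ t) :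
    (t + A) * (1 + t ^ (p + 1)) ^ (p / (p + 1) - 1) ≤ 1 + A := by
  set s := (1 + t ^ (p + 1)) ^ (p + 1)⁻¹ with hs
  have hexp : (1 + t ^ (p + 1)) ^ (p / (p + 1) - 1) = s⁻¹ := by
    rw [hs, ← Real.rpow_neg (by positivity)]
    congr 1
    field_simp
    ring
  have h_one_le : 1 ≤ s :=
    Real.one_le_rpow (le_add_of_nonneg_right (by positivity)) (by positivity)
  have h_t_le : t ≤ s := by
    rw [hs, Real.le_rpow_inv_iff_of_pos ht (by positivity) (by positivity)]
    exact le_add_of_nonneg_left zero_le_one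
  rw [hexp, ← div_eq_mul_inv, div_le_iff₀ (by positivity)]
  linarith [mul_le_mul_of_nonneg_left h_one_le hA]

lemma integral_norm_rpow_two_eq_lpNorm_sq {α : Type*} [MeasurableSpace α] {μ : Measure α}
    {g : α → E} (hg : MemLp g 2 μ) : ∫ x, ‖g x‖ ^ (2 : ℝ) ∂μ = lpNorm g 2 μ ^ 2 := by
  rw [lpNorm_eq_integral_norm_rpow_toReal two_ne_zero ENNReal.ofNat_ne_top
    hg.aestronglyMeasurable, ENNReal.toReal_ofNat, ← Real.rpow_mul_natCast (by positivity)]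
  norm_num

variable [InnerProductSpace ℝ E] {g : ℝ → E}

lemma abs_deriv_norm_rpow_add_one_le (hp : 0 < p) (hg : Differentiable ℝ g) (x : ℝ) :
    |deriv (fun y => ‖g y‖ ^ (p + 1)) x| ≤ (p + 1) * ‖g x‖ ^ p * ‖deriv g x‖ := by
  rw [← Real.norm_eq_abs, norm_deriv_eq_norm_fderiv, norm_deriv_eq_norm_fderiv]
  simpa only [add_sub_cancel_right] using
    norm_fderiv_norm_rpow_le hg (x := x) (lt_add_of_pos_left 1 hp)

lemma hasDerivAt_smoothedPow_norm (hp : 0 < p) (hg : Differentiable ℝ g) (x : ℝ) :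
    HasDerivAt (fun y => smoothedPow p ‖g y‖)
      (deriv (fun y => ‖g y‖ ^ (p + 1)) x * (p / (p + 1)) *
        (1 + ‖g x‖ ^ (p + 1)) ^ (p / (p + 1) - 1)) x :=
  (((hg.norm_rpow (lt_add_of_pos_left 1 hp) x).hasDerivAt.const_add 1).rpow_const
    (Or.inl (by positivity))).sub_const 1

lemma abs_deriv_smoothedPow_norm_le (hp : 0 < p) (hA : 0 ≤ A) (hg : Differentiable ℝ g)
    {x : ℝ} (hx : ‖deriv g x‖ ≤ ‖g x‖ + A) :
    |deriv (fun y => smoothedPow p ‖g y‖) x| ≤ p * (1 + A) * ‖g x‖ ^ p := by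
  set w := (1 + ‖g x‖ ^ (p + 1)) ^ (p / (p + 1) - 1)
  have hw : 0 ≤ w := by positivity
  rw [(hasDerivAt_smoothedPow_norm hp hg x).deriv, abs_mul, abs_mul, abs_of_nonneg hw,
    abs_of_nonneg (by positivity : 0 ≤ p / (p + 1))]
  calc |deriv (fun y => ‖g y‖ ^ (p + 1)) x| * (p / (p + 1)) * w
    _ ≤ (p + 1) * ‖g x‖ ^ p * (‖g x‖ + A) * (p / (p + 1)) * w := by
      gcongr
      exact (abs_deriv_norm_rpow_add_one_le hp hg x).trans (by gcongr)
    _ = p * ((‖g x‖ + A) * w) * ‖g x‖ ^ p := by field_simp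
    _ ≤ p * (1 + A) * ‖g x‖ ^ p := by
      gcongr
      exact add_mul_one_add_rpow_rpow_le hp.le hA (norm_nonneg _)

lemma norm_rpow_le_of_norm_deriv_le_norm_add (hp : 0 < p) (hA : 0 ≤ A)
    (hg : Differentiable ℝ g) (hint : Integrable fun x => ‖g x‖ ^ p)
    (hgrowth : ∀ᵐ x, ‖deriv g x‖ ≤ ‖g x‖ + A) (x : ℝ) :
    ‖g x‖ ^ p ≤ 1 + p / 2 * (1 + A) * ∫ y, ‖g y‖ ^ p := by
  have hdiff : Differentiable ℝ fun y => smoothedPow p ‖g y‖ :=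
    fun y => (hasDerivAt_smoothedPow_norm hp hg y).differentiableAt
  have hnorm (y : ℝ) : ‖smoothedPow p ‖g y‖‖ = smoothedPow p ‖g y‖ :=
    Real.norm_of_nonneg (smoothedPow_nonneg hp.le (norm_nonneg _))
  have hsmoothed : Integrable fun y => smoothedPow p ‖g y‖ :=
    hint.mono' hdiff.continuous.aestronglyMeasurable
      (.of_forall fun y => (hnorm y).trans_le (smoothedPow_le_rpow hp.le (norm_nonneg _)))
  have hembed := two_mul_norm_le_integral_of_norm_deriv_le hdiff hsmoothed
    (hint.const_mul (p * (1 + A)))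
    (hgrowth.mono fun y hy => abs_deriv_smoothedPow_norm_le hp hA hg hy) x
  rw [integral_const_mul, hnorm] at hembed
  linarith [rpow_le_one_add_smoothedPow hp.le (norm_nonneg (g x))]

lemma bddAbove_range_norm_of_norm_deriv_le_norm_add (hp : 0 < p) (hA : 0 ≤ A)
    (hg : Differentiable ℝ g) (hint : Integrable fun x => ‖g x‖ ^ p)
    (hgrowth : ∀ᵐ x, ‖deriv g x‖ ≤ ‖g x‖ + A) : BddAbove (Set.range fun x => ‖g x‖) := by
  refine ⟨(1 + p / 2 * (1 + A) * ∫ y, ‖g y‖ ^ p) ^ p⁻¹, Set.forall_mem_range.2 fun x => ?_⟩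
  have hx := norm_rpow_le_of_norm_deriv_le_norm_add hp hA hg hint hgrowth x
  exact (Real.le_rpow_inv_iff_of_pos (norm_nonneg _)
    ((Real.rpow_nonneg (norm_nonneg _) p).trans hx) hp).2 hx

lemma two_mul_norm_rpow_add_one_le_of_norm_deriv_le (hp : 0 < p) (hg : Differentiable ℝ g)
    (hint : Integrable fun x => ‖g x‖ ^ p) {L : ℝ} (hL : ∀ᵐ x, ‖deriv g x‖ ≤ L) (x : ℝ) :
    2 * ‖g x‖ ^ (p + 1) ≤ (p + 1) * L * ∫ y, ‖g y‖ ^ p := by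
  have hL0 : 0 ≤ L := hL.exists.elim fun y hy => (norm_nonneg _).trans hy
  obtain ⟨C, hC⟩ := bddAbove_range_norm_of_norm_deriv_le_norm_add hp hL0 hg hint
    (hL.mono fun y hy => hy.trans (le_add_of_nonneg_left (norm_nonneg _)))
  have hdiff : Differentiable ℝ fun y => ‖g y‖ ^ (p + 1) :=
    hg.norm_rpow (lt_add_of_pos_left 1 hp)
  have hnorm (y : ℝ) : ‖‖g y‖ ^ (p + 1)‖ = ‖g y‖ ^ (p + 1) :=
    Real.norm_of_nonneg (by positivity)
  have hint_succ : Integrable fun y => ‖g y‖ ^ (p + 1) := by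
    refine (hint.const_mul C).mono' hdiff.continuous.aestronglyMeasurable (.of_forall fun y => ?_)
    rw [hnorm, Real.rpow_add_one' (norm_nonneg _) (by positivity), mul_comm]
    gcongr
    exact hC (Set.mem_range_self y)
  have hbound : ∀ᵐ y, ‖deriv (fun y => ‖g y‖ ^ (p + 1)) y‖ ≤ (p + 1) * L * ‖g y‖ ^ p := by
    filter_upwards [hL] with y hy
    calc ‖deriv (fun y => ‖g y‖ ^ (p + 1)) y‖
      _ ≤ (p + 1) * ‖g y‖ ^ p * ‖deriv g y‖ := abs_deriv_norm_rpow_add_one_le hp hg y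
      _ ≤ (p + 1) * ‖g y‖ ^ p * L := by gcongr
      _ = (p + 1) * L * ‖g y‖ ^ p := by ring
  simpa only [hnorm, integral_const_mul] using
    two_mul_norm_le_integral_of_norm_deriv_le hdiff hint_succ (hint.const_mul _) hbound x

lemma two_mul_iSup_norm_rpow_add_one_le (hp : 0 < p) (hA : 0 ≤ A)
    (hg : Differentiable ℝ g) (hint : Integrable fun x => ‖g x‖ ^ p)
    (hgrowth : ∀ᵐ x, ‖deriv g x‖ ≤ ‖g x‖ + A) :
    2 * (⨆ x, ‖g x‖) ^ (p + 1) ≤ (p + 1) * ((⨆ x, ‖g x‖) + A) * ∫ x, ‖g x‖ ^ p := by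
  have hbdd := bddAbove_range_norm_of_norm_deriv_le_norm_add hp hA hg hint hgrowth
  set M := ⨆ x, ‖g x‖
  set K := (p + 1) * (M + A) * ∫ x, ‖g x‖ ^ p
  have hM : 0 ≤ M := Real.iSup_nonneg fun x => norm_nonneg (g x)
  have hpoint (x : ℝ) : 2 * ‖g x‖ ^ (p + 1) ≤ K :=
    two_mul_norm_rpow_add_one_le_of_norm_deriv_le hp hg hint
      (hgrowth.mono fun y hy => hy.trans (by gcongr; exact le_ciSup hbdd y)) x
  have hK : 0 ≤ K / 2 := by positivity
  have hroot : M ≤ (K / 2) ^ (p + 1)⁻¹ := ciSup_le fun x =>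
    (Real.le_rpow_inv_iff_of_pos (norm_nonneg _) hK (by positivity)).2 (by linarith [hpoint x])
  linarith [(Real.le_rpow_inv_iff_of_pos hM hK (by positivity)).1 hroot]

lemma le_of_two_mul_cube_le {M n A : ℝ} (hn : 0 ≤ n) (hA : 0 ≤ A)
    (h : 2 * M ^ 3 ≤ 3 * n ^ 3 * (M + A)) : M ≤ n * (1 + A / 2 + 3 / 4 * n) := by
  by_contra! hlt
  obtain rfl | hn := hn.eq_or_lt
  · rw [zero_mul] at hlt
    have : 0 < M ^ 3 := by positivity
    linarith
  obtain ⟨m, rfl⟩ : ∃ m, M = n * m := ⟨M / n, by field_simp⟩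
  have hm : 1 + A / 2 + 3 / 4 * n < m := lt_of_mul_lt_mul_left hlt hn.le
  have hcubic : 2 * m ^ 3 ≤ 3 * (n * m + A) :=
    le_of_mul_le_mul_left (by linarith) (by positivity : 0 < n ^ 3)
  have hm_pos : 0 < m := by linarith
  have hsq : 1 + A + 3 / 2 * n < m ^ 2 := by
    calc 1 + A + 3 / 2 * n
      _ ≤ (1 + A / 2 + 3 / 4 * n) ^ 2 := by linarith [sq_nonneg (A / 2 + 3 / 4 * n)]
      _ < m ^ 2 := by gcongr
  have hgt : 2 * m ^ 3 > 3 * (n * m + A) := by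
    calc 2 * m ^ 3
      _ = 2 * (m ^ 2 * m) := by ring
      _ > 2 * ((1 + A + 3 / 2 * n) * m) := by gcongr
      _ = 2 * ((1 + A) * m) + 3 * (n * m) := by ring
      _ ≥ 2 * ((1 + A) * (1 + A / 2)) + 3 * (n * m) := by gcongr; linarith
      _ ≥ 3 * (n * m + A) := by linarith [sq_nonneg A]
  linarith

lemma norm_le_lpNorm_two_rpow_mul (hA : 0 ≤ A) (hg : Differentiable ℝ g) (hg2 : MemLp g 2)
    (hgrowth : ∀ᵐ x, ‖deriv g x‖ ≤ ‖g x‖ + A) (x : ℝ) :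
    ‖g x‖ ≤ lpNorm g 2 volume ^ ((2 : ℝ) / 3) *
      (1 + A / 2 + 3 / 4 * lpNorm g 2 volume ^ ((2 : ℝ) / 3)) := by
  have hint : Integrable fun y => ‖g y‖ ^ (2 : ℝ) := by
    simpa only [Real.rpow_two] using hg2.integrable_norm_pow two_ne_zero
  have hcube : (lpNorm g 2 volume ^ ((2 : ℝ) / 3)) ^ 3 = lpNorm g 2 volume ^ 2 := by
    rw [← Real.rpow_mul_natCast lpNorm_nonneg]
    norm_num
  have hsup := two_mul_iSup_norm_rpow_add_one_le two_pos hA hg hint hgrowth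
  rw [integral_norm_rpow_two_eq_lpNorm_sq hg2, ← hcube, two_add_one_eq_three,
    Real.rpow_ofNat] at hsup
  calc ‖g x‖
    _ ≤ ⨆ y, ‖g y‖ :=
      le_ciSup (bddAbove_range_norm_of_norm_deriv_le_norm_add two_pos hA hg hint hgrowth) x
    _ ≤ _ := le_of_two_mul_cube_le (Real.rpow_nonneg lpNorm_nonneg _) hA (by linarith)

end Interpolation

lemma ae_norm_deriv_sub_le {E : Type*} [NormedAddCommGroup E] [NormedSpace ℝ E] {c : E}
    {u f : ℝ → E} (hu : Differentiable ℝ u) (hub : ∀ᵐ x, ‖deriv u x‖ ≤ ‖u x + c‖)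
    (hf : Differentiable ℝ f) (hfb : MemLp f ⊤) (hf'b : MemLp (deriv f) ⊤) :
    ∀ᵐ x, ‖deriv (fun x => u x - f x) x‖
      ≤ ‖u x - f x‖ + (‖c‖ + lpNorm f ⊤ volume + lpNorm (deriv f) ⊤ volume) := by
  filter_upwards [hub, ae_le_lpNorm_exponent_top hfb, ae_le_lpNorm_exponent_top hf'b]
    with x hux hfx hf'x
  have hsplit : u x + c = (u x - f x) + f x + c := by rw [sub_add_cancel]
  calc ‖deriv (fun x => u x - f x) x‖
    _ = ‖deriv u x - deriv f x‖ := by rw [deriv_fun_sub (hu x) (hf x)]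
    _ ≤ ‖u x + c‖ + ‖deriv f x‖ := (norm_sub_le _ _).trans (by gcongr)
    _ ≤ ‖u x - f x‖ + ‖f x‖ + ‖c‖ + ‖deriv f x‖ := by
      rw [hsplit]
      gcongr
      exact norm_add₃_le
    _ ≤ _ := by linarith

theorem stmt_2_general {E : Type*} [NormedAddCommGroup E] [InnerProductSpace ℝ E] (c : E)
    (u f : ℝ → E) (hu : Differentiable ℝ u) (hub : ∀ᵐ x, ‖deriv u x‖ ≤ ‖u x + c‖)
    (hf : Differentiable ℝ f) (hfb : MemLp f ⊤) (hf'b : MemLp (deriv f) ⊤)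
    (hg2 : MemLp (fun x => u x - f x) 2) :
    eLpNorm (fun x => u x - f x) ⊤ volume ≤ ENNReal.ofReal
      (((eLpNorm (fun x => u x - f x) 2 volume).toReal) ^ ((2:ℝ)/3) *
        (1 + 2 * ‖c‖
          + Real.sqrt 2 * ((eLpNorm (fun x => u x - f x) 2 volume).toReal) ^ ((2:ℝ)/3)
          + 2 * (eLpNorm f ⊤ volume).toReal
          + 2 * (eLpNorm (deriv f) ⊤ volume).toReal)) := by
  rw [eLpNorm_exponent_top, toReal_eLpNorm hg2.aestronglyMeasurable,
    toReal_eLpNorm hfb.aestronglyMeasurable, toReal_eLpNorm hf'b.aestronglyMeasurable]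
  set n := lpNorm (fun x => u x - f x) 2 volume ^ ((2 : ℝ) / 3)
  set A := ‖c‖ + lpNorm f ⊤ volume + lpNorm (deriv f) ⊤ volume with hA_def
  have hn : 0 ≤ n := Real.rpow_nonneg lpNorm_nonneg _
  have hA : 0 ≤ A := add_nonneg (add_nonneg (norm_nonneg c) lpNorm_nonneg) lpNorm_nonneg
  have hsqrt : 1 ≤ √2 := Real.one_le_sqrt.2 one_le_two
  refine eLpNormEssSup_le_of_ae_bound (.of_forall fun x => ?_)
  calc ‖u x - f x‖
    _ ≤ n * (1 + A / 2 + 3 / 4 * n) := norm_le_lpNorm_two_rpow_mul hA (hu.fun_sub hf) hg2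
      (ae_norm_deriv_sub_le hu hub hf hfb hf'b) x
    _ ≤ n * (1 + 2 * A + √2 * n) := by gcongr <;> linarith
    _ = _ := by rw [hA_def]; ring

/-- a priori `L^∞`–`L²` estimate.  If `u ∈ C¹ ∩ L²` satisfies the
pointwise gradient bound `|u'| ≤ |u + (2/3)κ|` and `f ∈ W^{1,∞} ∩ L²`, then the
sup-norm of `g = u - f` is controlled by a power of its `L²` norm. -/
theorem stmt_2 (κ : ℝ) (hκ : 0 ≤ κ) (u f : ℝ → ℝ)
    (hu1 : ContDiff ℝ 1 u) (hu2 : MemLp u 2 volume)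
    (hub : ∀ x, |deriv u x| ≤ |u x + (2/3)*κ|)
    (hfdiff : Differentiable ℝ f)
    (hfb : MemLp f ⊤ volume) (hf'b : MemLp (deriv f) ⊤ volume)
    (hf2 : MemLp f 2 volume) :
    eLpNorm (fun x => u x - f x) ⊤ volume ≤ ENNReal.ofReal
      (((eLpNorm (fun x => u x - f x) 2 volume).toReal) ^ ((2:ℝ)/3) *
        (1 + (4/3)*κ
          + Real.sqrt 2 * ((eLpNorm (fun x => u x - f x) 2 volume).toReal) ^ ((2:ℝ)/3)
          + 2 * (eLpNorm f ⊤ volume).toReal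
          + 2 * (eLpNorm (deriv f) ⊤ volume).toReal)) := by
  have hnorm : 2 * ‖(2/3)*κ‖ = (4/3)*κ := by
    rw [Real.norm_of_nonneg (by positivity), ← mul_assoc, mul_div_assoc']
    norm_num
  simpa only [hnorm] using stmt_2_general ((2/3)*κ) u f (hu1.differentiable one_ne_zero)
    (.of_forall hub) hfdiff hfb hf'b (hu2.sub hf2)
end
end

section
/- Let κ > 0, c > 2κ, and let φ : ℝ → ℝ be a bounded continuous function with φ' ∈ L²(ℝ), φ' ≠ 0. Let q(x) = ¼e^{−2|x|} and define the bounded self-adjoint operator 𝓛 on L²(ℝ) by (𝓛f)(x) = −φ(x)f(x) − 2κ(q*f)(x) + c( f(x) − 3(q*f)(x) ). Assume: (i) 𝓛φ' = 0; (ii) there exist λ̲ > 0 and χ ∈ L²(ℝ) with ‖χ‖_{L²} = 1 and 𝓛χ = −λ̲χ; (iii) there exists λ̄ > 0 such that (𝓛p, p)_{L²} ≥ λ̄‖p‖_{L²}² for every p orthogonal in L² to both χ and φ'; (iv) the subspace X₊ = (span{χ, φ'})^⊥ is invariant under 𝓛; (v) there exists ζ ∈ L²(ℝ) with 𝓛ζ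 = −(φ − 3q*φ) and (𝓛ζ, ζ)_{L²} < 0. Then there exist η > 0 and θ > 0 such that every y ∈ L²(ℝ) satisfying |∫_ℝ y (φ − 3q*φ) dx| + |∫_ℝ y (φ' − 3q*(φ')) dx| ≤ η ‖y‖_{L²} obeys (𝓛y, y)_{L²} ≥ θ ‖y‖_{L²}². -/
open MeasureTheory Real Filter Finset
open scoped ENNReal

noncomputable section

/-!
On `χ^⊥` the form of `𝓛` is nonnegative, so on all of `L²` it is Lorentzian: its only negative
direction is `χ`. A vector `z` that is `𝓛`-orthogonal to a vector `ζ` with `(𝓛ζ, ζ) < 0` therefore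
satisfies the reverse Cauchy–Schwarz inequality `-(𝓛ζ, ζ) (χ, z)² ≤ (χ, ζ)² (𝓛z, z)`, so that
`(𝓛z, z)` controls the component of `z` along `χ`. For `z ⊥ φ'` hypothesis (iii) controls the
rest, and adding multiples of the kernel vector `φ'`, which changes neither `(𝓛z, z)` nor
`(𝓛ζ, z)`, replaces the condition `z ⊥ φ'` by `z ⊥ g` for any `g` with `(g, φ') ≠ 0`. Here
`g = φ' - 3q*φ'`, and `(g, φ') ≥ ‖φ'‖²/4` because `q` has mass `1/4`. Finally, a vector almost
orthogonal to `𝓛ζ` and `g` is close to one that is exactly orthogonal to both, and `𝓛`, being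
symmetric and everywhere defined, is bounded.
-/

section SymmetricOperator

open scoped InnerProductSpace

variable {H : Type*} [NormedAddCommGroup H] [InnerProductSpace ℝ H]

theorem sq_inner_map_le_of_nonneg_on {L : H →ₗ[ℝ] H} (hL : L.IsSymmetric) {K : Submodule ℝ H}
    (hK : ∀ p ∈ K, 0 ≤ ⟪L p, p⟫_ℝ) {p q : H} (hp : p ∈ K) (hq : q ∈ K) :
    ⟪L p, q⟫_ℝ ^ 2 ≤ ⟪L p, p⟫_ℝ * ⟪L q, q⟫_ℝ := by
  let B : LinearMap.BilinForm ℝ K := (innerₗ H ∘ₗ L).domRestrict₁₂ K K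
  have hB : LinearMap.IsSymm B := ⟨fun u v => (hL u v).trans (real_inner_comm _ _)⟩
  exact B.apply_sq_le_of_symm (fun u => hK u u.2) hB ⟨p, hp⟩ ⟨q, hq⟩

theorem inner_map_self_sub_smul_of_map_eq_zero {L : H →ₗ[ℝ] H} (hL : L.IsSymmetric) {e : H}
    (he : L e = 0) (b : ℝ) (z : H) : ⟪L (z - b • e), z - b • e⟫_ℝ = ⟪L z, z⟫_ℝ := by
  have hLz : L (z - b • e) = L z := by rw [map_sub, map_smul, he, smul_zero, sub_zero]
  rw [hLz, inner_sub_right, inner_smul_right, hL z e, he, inner_zero_right, mul_zero, sub_zero]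

theorem inner_sub_inner_div_smul_eq_zero {e : H} (he : e ≠ 0) (z : H) :
    ⟪e, z - (⟪e, z⟫_ℝ / ⟪e, e⟫_ℝ) • e⟫_ℝ = 0 := by
  rw [inner_sub_right, inner_smul_right, div_mul_cancel₀ _ (inner_self_ne_zero.2 he), sub_self]

theorem norm_le_mul_norm_sub_smul_of_inner_eq_zero {g e z : H} (hge : ⟪g, e⟫_ℝ ≠ 0)
    (hz : ⟪g, z⟫_ℝ = 0) (b : ℝ) :
    ‖z‖ ≤ (1 + ‖g‖ * ‖e‖ / |⟪g, e⟫_ℝ|) * ‖z - b • e‖ := by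
  have hb : |b| * |⟪g, e⟫_ℝ| ≤ ‖g‖ * ‖z - b • e‖ := by
    simpa [inner_sub_right, inner_smul_right, hz, abs_mul] using
      abs_real_inner_le_norm g (z - b • e)
  calc ‖z‖ = ‖(z - b • e) + b • e‖ := by rw [sub_add_cancel]
    _ ≤ ‖z - b • e‖ + |b| * ‖e‖ := by
      simpa only [norm_smul, Real.norm_eq_abs] using norm_add_le (z - b • e) (b • e)
    _ ≤ ‖z - b • e‖ + ‖g‖ * ‖z - b • e‖ / |⟪g, e⟫_ℝ| * ‖e‖ := by
      gcongr
      exact (le_div_iff₀ (abs_pos.2 hge)).2 hb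
    _ = (1 + ‖g‖ * ‖e‖ / |⟪g, e⟫_ℝ|) * ‖z - b • e‖ := by ring

theorem inner_map_sub_inner_smul_of_eigenvector {L : H →ₗ[ℝ] H} (hL : L.IsSymmetric) {χ : H}
    {lam : ℝ} (hnorm : ‖χ‖ = 1) (hχ : L χ = -lam • χ) (x y : H) :
    ⟪L (x - ⟪χ, x⟫_ℝ • χ), y - ⟪χ, y⟫_ℝ • χ⟫_ℝ = ⟪L x, y⟫_ℝ + lam * ⟪χ, x⟫_ℝ * ⟪χ, y⟫_ℝ := by
  have hxχ : ⟪L x, χ⟫_ℝ = -lam * ⟪χ, x⟫_ℝ := by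
    rw [hL, hχ, inner_smul_right, real_inner_comm]
  have hχχ : ⟪χ, χ⟫_ℝ = 1 := by rw [real_inner_self_eq_norm_sq, hnorm, one_pow]
  simp only [map_sub, map_smul, hχ, inner_sub_left, inner_sub_right, inner_smul_left,
    inner_smul_right, hxχ, hχχ, conj_trivial]
  ring

/-- A symmetric form with a single negative direction is Lorentzian, and this is its reverse
Cauchy–Schwarz inequality. -/
theorem neg_inner_map_self_mul_sq_le_of_inner_map_eq_zero {L : H →ₗ[ℝ] H} (hL : L.IsSymmetric)
    {χ : H} {lam : ℝ} (hlam : 0 < lam) (hnorm : ‖χ‖ = 1) (hχ : L χ = -lam • χ)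
    (hnonneg : ∀ p, ⟪χ, p⟫_ℝ = 0 → 0 ≤ ⟪L p, p⟫_ℝ) {ζ z : H} (hζ : ⟪L ζ, ζ⟫_ℝ < 0)
    (hz : ⟪L ζ, z⟫_ℝ = 0) :
    -⟪L ζ, ζ⟫_ℝ * ⟪χ, z⟫_ℝ ^ 2 ≤ ⟪χ, ζ⟫_ℝ ^ 2 * ⟪L z, z⟫_ℝ := by
  have horth (x : H) : x - ⟪χ, x⟫_ℝ • χ ∈ (ℝ ∙ χ)ᗮ := by
    rw [Submodule.mem_orthogonal_singleton_iff_inner_right, inner_sub_right, inner_smul_right,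
      real_inner_self_eq_norm_sq, hnorm, one_pow, mul_one, sub_self]
  have hK : ∀ p ∈ (ℝ ∙ χ)ᗮ, 0 ≤ ⟪L p, p⟫_ℝ := fun p hp =>
    hnonneg p (Submodule.mem_orthogonal_singleton_iff_inner_right.1 hp)
  have hcs := sq_inner_map_le_of_nonneg_on hL hK (horth ζ) (horth z)
  have hpos (x : H) := hK _ (horth x)
  simp only [inner_map_sub_inner_smul_of_eigenvector hL hnorm hχ, hz] at hcs hpos
  have hζpos := hpos ζ
  have hzpos := hpos z
  set a := ⟪χ, z⟫_ℝ
  set a₀ := ⟪χ, ζ⟫_ℝ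
  set Q := ⟪L z, z⟫_ℝ
  set Q₀ := ⟪L ζ, ζ⟫_ℝ
  have hQ : 0 ≤ Q := by
    by_contra! hQneg
    have ha : lam * -Q₀ * a ^ 2 ≤ 0 := by nlinarith
    have ha0 : a = 0 := pow_eq_zero_iff two_ne_zero |>.1 <|
      le_antisymm (nonpos_of_mul_nonpos_right ha (by nlinarith)) (sq_nonneg a)
    simp only [ha0, mul_zero, add_zero] at hzpos
    linarith
  have hmul : 0 ≤ lam * (a₀ ^ 2 * Q - -Q₀ * a ^ 2) := by
    nlinarith [mul_nonneg (neg_nonneg.2 hζ.le) hQ]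
  exact sub_nonneg.1 (nonneg_of_mul_nonneg_right hmul hlam)

theorem inner_eq_zero_of_eigenvector_of_map_eq_zero {L : H →ₗ[ℝ] H} (hL : L.IsSymmetric)
    {χ e : H} {lam : ℝ} (hlam : lam ≠ 0) (hχ : L χ = -lam • χ) (he : L e = 0) :
    ⟪χ, e⟫_ℝ = 0 := by
  have h := hL χ e
  rw [hχ, he, inner_zero_right, real_inner_smul_left] at h
  exact (mul_eq_zero.1 h).resolve_left (neg_ne_zero.2 hlam)

theorem inner_map_self_nonneg_of_coercive_on_compl {L : H →ₗ[ℝ] H} (hL : L.IsSymmetric)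
    {χ e : H} (he : L e = 0) (hχe : ⟪χ, e⟫_ℝ = 0) {μ : ℝ} (hμ : 0 ≤ μ)
    (hcoer : ∀ p, ⟪χ, p⟫_ℝ = 0 → ⟪e, p⟫_ℝ = 0 → μ * ‖p‖ ^ 2 ≤ ⟪L p, p⟫_ℝ)
    {p : H} (hp : ⟪χ, p⟫_ℝ = 0) : 0 ≤ ⟪L p, p⟫_ℝ := by
  obtain rfl | he0 := eq_or_ne e 0
  · exact (by positivity : 0 ≤ μ * ‖p‖ ^ 2).trans (hcoer p hp (inner_zero_left p))
  · rw [← inner_map_self_sub_smul_of_map_eq_zero hL he (⟪e, p⟫_ℝ / ⟪e, e⟫_ℝ) p]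
    refine le_trans (by positivity) (hcoer _ ?_ (inner_sub_inner_div_smul_eq_zero he0 p))
    rw [inner_sub_right, inner_smul_right, hp, hχe, mul_zero, sub_zero]

theorem mul_norm_sq_le_inner_map_self_add_of_coercive_on_compl {L : H →ₗ[ℝ] H}
    (hL : L.IsSymmetric) {χ e : H} {lam μ : ℝ} (hnorm : ‖χ‖ = 1) (hχ : L χ = -lam • χ)
    (hχe : ⟪χ, e⟫_ℝ = 0)
    (hcoer : ∀ p, ⟪χ, p⟫_ℝ = 0 → ⟪e, p⟫_ℝ = 0 → μ * ‖p‖ ^ 2 ≤ ⟪L p, p⟫_ℝ)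
    {z : H} (hz : ⟪e, z⟫_ℝ = 0) :
    μ * ‖z‖ ^ 2 ≤ ⟪L z, z⟫_ℝ + (lam + μ) * ⟪χ, z⟫_ℝ ^ 2 := by
  have hχχ : ⟪χ, χ⟫_ℝ = 1 := by rw [real_inner_self_eq_norm_sq, hnorm, one_pow]
  have hp := hcoer (z - ⟪χ, z⟫_ℝ • χ)
    (by rw [inner_sub_right, inner_smul_right, hχχ, mul_one, sub_self])
    (by rw [inner_sub_right, inner_smul_right, hz, real_inner_comm χ e, hχe, mul_zero, sub_zero])
  have hsq : ‖z - ⟪χ, z⟫_ℝ • χ‖ ^ 2 = ‖z‖ ^ 2 - ⟪χ, z⟫_ℝ ^ 2 := by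
    rw [norm_sub_sq_real, inner_smul_right, norm_smul, hnorm, mul_one, Real.norm_eq_abs, sq_abs,
      real_inner_comm χ z]
    ring
  rw [inner_map_sub_inner_smul_of_eigenvector hL hnorm hχ, hsq] at hp
  linarith

theorem exists_coercive_of_inner_map_eq_zero {L : H →ₗ[ℝ] H} (hL : L.IsSymmetric)
    {χ e ζ : H} {lam μ : ℝ} (hlam : 0 < lam) (hμ : 0 < μ) (hnorm : ‖χ‖ = 1)
    (hχ : L χ = -lam • χ) (he : L e = 0)
    (hcoer : ∀ p, ⟪χ, p⟫_ℝ = 0 → ⟪e, p⟫_ℝ = 0 → μ * ‖p‖ ^ 2 ≤ ⟪L p, p⟫_ℝ)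
    (hζ : ⟪L ζ, ζ⟫_ℝ < 0) :
    ∃ θ > 0, ∀ z, ⟪L ζ, z⟫_ℝ = 0 → ⟪e, z⟫_ℝ = 0 → θ * ‖z‖ ^ 2 ≤ ⟪L z, z⟫_ℝ := by
  have hχe := inner_eq_zero_of_eigenvector_of_map_eq_zero hL hlam.ne' hχ he
  have hQ : 0 < -⟪L ζ, ζ⟫_ℝ := neg_pos.2 hζ
  set C := ⟪χ, ζ⟫_ℝ ^ 2 / -⟪L ζ, ζ⟫_ℝ with hC
  have : 0 ≤ C := by positivity
  refine ⟨μ / (1 + (lam + μ) * C), by positivity, fun z hzζ hze => ?_⟩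
  have hχz : ⟪χ, z⟫_ℝ ^ 2 ≤ C * ⟪L z, z⟫_ℝ := by
    rw [hC, div_mul_eq_mul_div, le_div_iff₀' hQ]
    exact neg_inner_map_self_mul_sq_le_of_inner_map_eq_zero hL hlam hnorm hχ
      (fun p => inner_map_self_nonneg_of_coercive_on_compl hL he hχe hμ.le hcoer) hζ hzζ
  rw [div_mul_eq_mul_div, div_le_iff₀' (by positivity)]
  calc μ * ‖z‖ ^ 2 ≤ ⟪L z, z⟫_ℝ + (lam + μ) * ⟪χ, z⟫_ℝ ^ 2 :=
        mul_norm_sq_le_inner_map_self_add_of_coercive_on_compl hL hnorm hχ hχe hcoer hze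
    _ ≤ ⟪L z, z⟫_ℝ + (lam + μ) * (C * ⟪L z, z⟫_ℝ) := by gcongr
    _ = (1 + (lam + μ) * C) * ⟪L z, z⟫_ℝ := by ring

theorem exists_coercive_of_inner_ne_zero {L : H →ₗ[ℝ] H} (hL : L.IsSymmetric) {u e g : H}
    (he : L e = 0) (hue : ⟪u, e⟫_ℝ = 0) (hge : ⟪g, e⟫_ℝ ≠ 0) {θ : ℝ} (hθ : 0 < θ)
    (hcoer : ∀ z, ⟪u, z⟫_ℝ = 0 → ⟪e, z⟫_ℝ = 0 → θ * ‖z‖ ^ 2 ≤ ⟪L z, z⟫_ℝ) :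
    ∃ θ' > 0, ∀ z, ⟪u, z⟫_ℝ = 0 → ⟪g, z⟫_ℝ = 0 → θ' * ‖z‖ ^ 2 ≤ ⟪L z, z⟫_ℝ := by
  have he0 : e ≠ 0 := fun h => hge (by rw [h, inner_zero_right])
  set C := 1 + ‖g‖ * ‖e‖ / |⟪g, e⟫_ℝ|
  refine ⟨θ / C ^ 2, by positivity, fun z hzu hzg => ?_⟩
  set b := ⟪e, z⟫_ℝ / ⟪e, e⟫_ℝ
  have hzb : ⟪u, z - b • e⟫_ℝ = 0 := by
    rw [inner_sub_right, inner_smul_right, hzu, hue, mul_zero, sub_zero]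
  calc θ / C ^ 2 * ‖z‖ ^ 2 ≤ θ / C ^ 2 * (C * ‖z - b • e‖) ^ 2 := by
        gcongr
        exact norm_le_mul_norm_sub_smul_of_inner_eq_zero hge hzg b
    _ = θ * ‖z - b • e‖ ^ 2 := by
        have : C ≠ 0 := by positivity
        field_simp
    _ ≤ ⟪L (z - b • e), z - b • e⟫_ℝ := hcoer _ hzb (inner_sub_inner_div_smul_eq_zero he0 z)
    _ = ⟪L z, z⟫_ℝ := inner_map_self_sub_smul_of_map_eq_zero hL he b z

theorem exists_norm_le_mul_sum_abs_inner_of_mem_span {ι : Type*} [Fintype ι] (v : ι → H) :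
    ∃ C : ℝ, 0 ≤ C ∧ ∀ x ∈ Submodule.span ℝ (Set.range v), ‖x‖ ≤ C * ∑ i, |⟪v i, x⟫_ℝ| := by
  have := FiniteDimensional.span_of_finite ℝ (Set.finite_range v)
  let T : Submodule.span ℝ (Set.range v) →ₗ[ℝ] ι → ℝ :=
    LinearMap.pi fun i => (innerₗ H (v i)).domRestrict _
  have hT : LinearMap.ker T = ⊥ := by
    refine LinearMap.ker_eq_bot'.2 fun x hx => Subtype.ext ?_
    have hx_orth : (x : H) ∈ (Submodule.span ℝ (Set.range v))ᗮ := by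
      rw [Submodule.mem_orthogonal]
      intro u hu
      induction hu using Submodule.span_induction with
      | mem _ h => obtain ⟨i, rfl⟩ := h; exact congrFun hx i
      | zero => exact inner_zero_left _
      | add _ _ _ _ h₁ h₂ => rw [inner_add_left, h₁, h₂, add_zero]
      | smul _ _ _ h => rw [inner_smul_left, h, mul_zero]
    exact inner_self_eq_zero.1 ((Submodule.mem_orthogonal _ _).1 hx_orth x x.2)
  obtain ⟨C, -, hC⟩ := T.exists_antilipschitzWith hT
  refine ⟨C, C.2, fun x hx => (ZeroHomClass.bound_of_antilipschitz T hC ⟨x, hx⟩).trans ?_⟩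
  gcongr
  refine (pi_norm_le_iff_of_nonneg (by positivity)).2 fun i => ?_
  exact Finset.single_le_sum (f := fun i => |⟪v i, x⟫_ℝ|) (fun _ _ => abs_nonneg _) (mem_univ i)

theorem exists_orthogonal_norm_sub_le {ι : Type*} [Fintype ι] (v : ι → H) :
    ∃ C : ℝ, 0 ≤ C ∧ ∀ y, ∃ y₀, (∀ i, ⟪v i, y₀⟫_ℝ = 0) ∧
      ‖y - y₀‖ ≤ C * ∑ i, |⟪v i, y⟫_ℝ| := by
  have := FiniteDimensional.span_of_finite ℝ (Set.finite_range v)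
  obtain ⟨C, hC0, hC⟩ := exists_norm_le_mul_sum_abs_inner_of_mem_span v
  set U := Submodule.span ℝ (Set.range v)
  have horth (y : H) (i : ι) : ⟪v i, y - U.starProjection y⟫_ℝ = 0 :=
    Submodule.inner_right_of_mem_orthogonal (Submodule.subset_span (Set.mem_range_self i))
      (Submodule.sub_starProjection_mem_orthogonal y)
  refine ⟨C, hC0, fun y => ⟨y - U.starProjection y, horth y, ?_⟩⟩
  have hinner (i : ι) : ⟪v i, U.starProjection y⟫_ℝ = ⟪v i, y⟫_ℝ := by
    rw [← sub_eq_zero, ← inner_sub_right, ← neg_sub y, inner_neg_right, horth, neg_zero]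
  simpa only [sub_sub_cancel, hinner] using hC _ (Submodule.starProjection_apply_mem U y)

theorem mul_norm_sq_le_inner_map_self_of_norm_sub_le (L : H →L[ℝ] H) {θ δ : ℝ} (hθ : 0 ≤ θ)
    (hδ : δ ≤ 1 / 2) (hLδ : 24 * ‖L‖ * δ ≤ θ) {y y₀ : H} (hy₀ : θ * ‖y₀‖ ^ 2 ≤ ⟪L y₀, y₀⟫_ℝ)
    (hy : ‖y - y₀‖ ≤ δ * ‖y‖) : θ / 8 * ‖y‖ ^ 2 ≤ ⟪L y, y⟫_ℝ := by
  have hhalf : ‖y - y₀‖ ≤ ‖y‖ / 2 := by nlinarith [norm_nonneg y]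
  have hlower : ‖y‖ / 2 ≤ ‖y₀‖ := by linarith [norm_sub_norm_le y y₀]
  have hupper : ‖y₀‖ ≤ 2 * ‖y‖ := by
    linarith [norm_sub_norm_le y₀ y, norm_sub_rev y y₀, norm_nonneg y]
  have hexpand : ⟪L y, y⟫_ℝ = ⟪L y₀, y₀⟫_ℝ + (⟪L (y - y₀), y⟫_ℝ + ⟪L y₀, y - y₀⟫_ℝ) := by
    rw [map_sub, inner_sub_left, inner_sub_right]
    ring
  have herror : |⟪L (y - y₀), y⟫_ℝ + ⟪L y₀, y - y₀⟫_ℝ| ≤ 3 * ‖L‖ * δ * ‖y‖ ^ 2 := by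
    calc |⟪L (y - y₀), y⟫_ℝ + ⟪L y₀, y - y₀⟫_ℝ|
        ≤ ‖L (y - y₀)‖ * ‖y‖ + ‖L y₀‖ * ‖y - y₀‖ := (abs_add_le _ _).trans
          (add_le_add (abs_real_inner_le_norm _ _) (abs_real_inner_le_norm _ _))
      _ ≤ ‖L‖ * ‖y - y₀‖ * ‖y‖ + ‖L‖ * (2 * ‖y‖) * ‖y - y₀‖ := by
          gcongr
          · exact L.le_opNorm _
          · exact L.le_opNorm_of_le hupper
      _ = 3 * ‖L‖ * ‖y‖ * ‖y - y₀‖ := by ring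
      _ ≤ 3 * ‖L‖ * ‖y‖ * (δ * ‖y‖) := by gcongr
      _ = 3 * ‖L‖ * δ * ‖y‖ ^ 2 := by ring
  have hmain : θ * (‖y‖ / 2) ^ 2 ≤ ⟪L y₀, y₀⟫_ℝ := le_trans (by gcongr) hy₀
  have hsmall : 24 * ‖L‖ * δ * ‖y‖ ^ 2 ≤ θ * ‖y‖ ^ 2 := by gcongr
  linarith [neg_abs_le (⟪L (y - y₀), y⟫_ℝ + ⟪L y₀, y - y₀⟫_ℝ)]

theorem exists_coercive_of_almost_orthogonal {ι : Type*} [Fintype ι] (L : H →L[ℝ] H) (v : ι → H)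
    {θ : ℝ} (hθ : 0 < θ) (hcoer : ∀ y, (∀ i, ⟪v i, y⟫_ℝ = 0) → θ * ‖y‖ ^ 2 ≤ ⟪L y, y⟫_ℝ) :
    ∃ η > 0, ∃ θ' > 0, ∀ y, ∑ i, |⟪v i, y⟫_ℝ| ≤ η * ‖y‖ → θ' * ‖y‖ ^ 2 ≤ ⟪L y, y⟫_ℝ := by
  obtain ⟨C, hC0, hC⟩ := exists_orthogonal_norm_sub_le v
  obtain ⟨δ, hδ0, hδ, hLδ⟩ : ∃ δ > 0, δ ≤ 1 / 2 ∧ 24 * ‖L‖ * δ ≤ θ := by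
    refine ⟨min (1 / 2) (θ / (24 * ‖L‖ + 1)), by positivity, min_le_left _ _, ?_⟩
    have h : (24 * ‖L‖ + 1) * min (1 / 2) (θ / (24 * ‖L‖ + 1)) ≤ θ :=
      (le_div_iff₀' (by positivity)).1 (min_le_right _ _)
    exact le_trans (by gcongr; linarith) h
  refine ⟨δ / (C + 1), by positivity, θ / 8, by positivity, fun y hy => ?_⟩
  obtain ⟨y₀, hy₀, hyy₀⟩ := hC y
  refine mul_norm_sq_le_inner_map_self_of_norm_sub_le L hθ.le hδ hLδ (hcoer y₀ hy₀) ?_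
  calc ‖y - y₀‖ ≤ C * ∑ i, |⟪v i, y⟫_ℝ| := hyy₀
    _ ≤ (C + 1) * (δ / (C + 1) * ‖y‖) := by gcongr; linarith
    _ = δ * ‖y‖ := by field_simp

theorem exists_coercive_of_single_negative_direction [CompleteSpace H] {L : H →ₗ[ℝ] H}
    (hL : L.IsSymmetric) {χ e ζ g : H} {lam μ : ℝ} (hlam : 0 < lam) (hμ : 0 < μ)
    (hnorm : ‖χ‖ = 1) (hχ : L χ = -lam • χ) (he : L e = 0)
    (hcoer : ∀ p, ⟪χ, p⟫_ℝ = 0 → ⟪e, p⟫_ℝ = 0 → μ * ‖p‖ ^ 2 ≤ ⟪L p, p⟫_ℝ)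
    (hζ : ⟪L ζ, ζ⟫_ℝ < 0) (hge : ⟪g, e⟫_ℝ = 0 → e = 0) :
    ∃ η > 0, ∃ θ > 0, ∀ y,
      |⟪L ζ, y⟫_ℝ| + |⟪g, y⟫_ℝ| ≤ η * ‖y‖ → θ * ‖y‖ ^ 2 ≤ ⟪L y, y⟫_ℝ := by
  have hζe : ⟪L ζ, e⟫_ℝ = 0 := by rw [hL, he, inner_zero_right]
  obtain ⟨θ₁, hθ₁, h₁⟩ := exists_coercive_of_inner_map_eq_zero hL hlam hμ hnorm hχ he hcoer hζ
  obtain ⟨θ₂, hθ₂, h₂⟩ : ∃ θ > 0, ∀ z, ⟪L ζ, z⟫_ℝ = 0 → ⟪g, z⟫_ℝ = 0 →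
      θ * ‖z‖ ^ 2 ≤ ⟪L z, z⟫_ℝ := by
    obtain rfl | he0 := eq_or_ne e 0
    · exact ⟨θ₁, hθ₁, fun z hz _ => h₁ z hz (inner_zero_left z)⟩
    · exact exists_coercive_of_inner_ne_zero hL he hζe (mt hge he0) hθ₁ h₁
  simpa [Fin.sum_univ_two] using exists_coercive_of_almost_orthogonal ⟨L, hL.continuous⟩
    ![L ζ, g] hθ₂ fun y hy => h₂ y (hy 0) (hy 1)

end SymmetricOperator

section Lp

open scoped InnerProductSpace

variable {α : Type*} [MeasurableSpace α] {μ : Measure α}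

theorem memLp_mul_of_bounded {p : ℝ≥0∞} {w f : α → ℝ} (hw : AEStronglyMeasurable w μ)
    (hbdd : ∃ M, ∀ x, |w x| ≤ M) (hf : MemLp f p μ) : MemLp (fun x => w x * f x) p μ := by
  obtain ⟨M, hM⟩ := hbdd
  exact hf.mul (memLp_top_of_bound hw M (.of_forall hM))

theorem inner_toLp_toLp {f g : α → ℝ} (hf : MemLp f 2 μ) (hg : MemLp g 2 μ) :
    ⟪hf.toLp f, hg.toLp g⟫_ℝ = ∫ x, f x * g x ∂μ := by
  rw [L2.inner_def]
  refine integral_congr_ae ?_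
  filter_upwards [hf.coeFn_toLp, hg.coeFn_toLp] with x hfx hgx
  rw [hfx, hgx, RCLike.inner_apply, conj_trivial, mul_comm]

theorem norm_toLp_sq {f : α → ℝ} (hf : MemLp f 2 μ) : ‖hf.toLp f‖ ^ 2 = ∫ x, f x ^ 2 ∂μ := by
  rw [← real_inner_self_eq_norm_sq, inner_toLp_toLp hf hf]
  simp only [sq]

theorem exists_isSymmetric_apply_toLp {F : (α → ℝ) → α → ℝ}
    (hF : ∀ {f}, MemLp f 2 μ → MemLp (F f) 2 μ)
    (hsymm : ∀ {f g}, MemLp f 2 μ → MemLp g 2 μ →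
      ∫ x, F f x * g x ∂μ = ∫ x, f x * F g x ∂μ) :
    ∃ L : Lp ℝ 2 μ →ₗ[ℝ] Lp ℝ 2 μ, L.IsSymmetric ∧
      ∀ f (hf : MemLp f 2 μ), L (hf.toLp f) = (hF hf).toLp (F f) := by
  let T (u : Lp ℝ 2 μ) : Lp ℝ 2 μ := (hF (Lp.memLp u)).toLp (F u)
  have inner_toLp_T {f : α → ℝ} (hf : MemLp f 2 μ) (v : Lp ℝ 2 μ) :
      ⟪(hF hf).toLp (F f), v⟫_ℝ = ⟪hf.toLp f, T v⟫_ℝ := by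
    conv_lhs => rw [← Lp.toLp_coeFn v (Lp.memLp v)]
    rw [inner_toLp_toLp, inner_toLp_toLp, hsymm hf (Lp.memLp v)]
  have inner_T (u v : Lp ℝ 2 μ) : ⟪T u, v⟫_ℝ = ⟪u, T v⟫_ℝ := by
    rw [inner_toLp_T (Lp.memLp u) v, Lp.toLp_coeFn]
  refine ⟨⟨⟨T, fun u v => ?_⟩, fun a u => ?_⟩, inner_T, fun f hf => ?_⟩ <;>
    refine ext_inner_right ℝ fun w => ?_
  · simp only [inner_T, inner_add_left]
  · simp only [inner_T, inner_smul_left, RingHom.id_apply]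
  · exact (inner_T _ w).trans (inner_toLp_T hf w).symm

theorem sq_integral_mul_le {k f : α → ℝ} (hk : Integrable k μ) (hf : AEStronglyMeasurable f μ)
    (hkf : Integrable (fun x => |k x| * f x ^ 2) μ) :
    (∫ x, k x * f x ∂μ) ^ 2 ≤ (∫ x, |k x| ∂μ) * ∫ x, |k x| * f x ^ 2 ∂μ := by
  have hsqrt : AEStronglyMeasurable (fun x => √|k x|) μ :=
    continuous_sqrt.comp_aestronglyMeasurable hk.1.norm
  have hu : MemLp (fun x => √|k x|) 2 μ := by
    simpa only [memLp_two_iff_integrable_sq hsqrt, sq_sqrt (abs_nonneg _)] using hk.abs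
  have hv : MemLp (fun x => √|k x| * |f x|) 2 μ :=
    (memLp_two_iff_integrable_sq (hsqrt.mul hf.norm)).2 <| by
      simpa only [Pi.mul_apply, mul_pow, sq_sqrt (abs_nonneg _), Real.norm_eq_abs, sq_abs] using hkf
  have hcs := real_inner_mul_inner_self_le (hu.toLp _) (hv.toLp _)
  simp only [inner_toLp_toLp, ← mul_assoc, mul_self_sqrt (abs_nonneg _), ← abs_mul] at hcs
  calc (∫ x, k x * f x ∂μ) ^ 2 ≤ (∫ x, |k x * f x| ∂μ) ^ 2 :=
        sq_le_sq.2 ((abs_integral_le_integral_abs).trans (le_abs_self _))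
    _ ≤ (∫ x, |k x| ∂μ) * ∫ x, |k x| * f x ^ 2 ∂μ := by
        rw [sq]
        refine hcs.trans_eq ?_
        congr 2 with x
        rw [mul_right_comm √_, mul_self_sqrt (abs_nonneg _), mul_assoc, abs_mul_abs_self, sq]

theorem exists_integral_coercive_of_single_negative_direction {F : (α → ℝ) → α → ℝ}
    (hF : ∀ {f}, MemLp f 2 μ → MemLp (F f) 2 μ)
    (hsymm : ∀ {f g}, MemLp f 2 μ → MemLp g 2 μ →
      ∫ x, F f x * g x ∂μ = ∫ x, f x * F g x ∂μ)
    {χ e ζ g : α → ℝ} (hχ : MemLp χ 2 μ) (he : MemLp e 2 μ) (hζ : MemLp ζ 2 μ)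
    (hg : MemLp g 2 μ) {lam ν : ℝ} (hlam : 0 < lam) (hν : 0 < ν) (hχnorm : ∫ x, χ x ^ 2 ∂μ = 1)
    (hFχ : F χ =ᵐ[μ] -lam • χ) (hFe : F e =ᵐ[μ] 0)
    (hcoer : ∀ p, MemLp p 2 μ → ∫ x, p x * χ x ∂μ = 0 → ∫ x, p x * e x ∂μ = 0 →
      ν * ∫ x, p x ^ 2 ∂μ ≤ ∫ x, F p x * p x ∂μ)
    (hFζ : ∫ x, F ζ x * ζ x ∂μ < 0)
    (hge : ∫ x, g x * e x ∂μ = 0 → ∫ x, e x ^ 2 ∂μ = 0) :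
    ∃ η > 0, ∃ θ > 0, ∀ y, MemLp y 2 μ →
      |∫ x, F ζ x * y x ∂μ| + |∫ x, g x * y x ∂μ| ≤ η * (eLpNorm y 2 μ).toReal →
      θ * (eLpNorm y 2 μ).toReal ^ 2 ≤ ∫ x, F y x * y x ∂μ := by
  obtain ⟨L, hL, hLapply⟩ := exists_isSymmetric_apply_toLp hF hsymm
  have inner_L {u v : α → ℝ} (hu : MemLp u 2 μ) (hv : MemLp v 2 μ) :
      ⟪L (hu.toLp u), hv.toLp v⟫_ℝ = ∫ x, F u x * v x ∂μ := by
    rw [hLapply, inner_toLp_toLp]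
  have hχ_norm : ‖hχ.toLp χ‖ = 1 := by
    rwa [← sq_eq_sq₀ (norm_nonneg _) zero_le_one, one_pow, norm_toLp_sq]
  have hLχ : L (hχ.toLp χ) = -lam • hχ.toLp χ := by
    rw [hLapply, ← MemLp.toLp_const_smul]
    exact MemLp.toLp_congr _ _ hFχ
  have hLe : L (he.toLp e) = 0 := by
    rw [hLapply, Lp.eq_zero_iff_ae_eq_zero]
    exact (hF he).coeFn_toLp.trans hFe
  have hL_coer (p : Lp ℝ 2 μ) (hpχ : ⟪hχ.toLp χ, p⟫_ℝ = 0) (hpe : ⟪he.toLp e, p⟫_ℝ = 0) :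
      ν * ‖p‖ ^ 2 ≤ ⟪L p, p⟫_ℝ := by
    rw [← Lp.toLp_coeFn p (Lp.memLp p)] at hpχ hpe ⊢
    rw [real_inner_comm, inner_toLp_toLp] at hpχ hpe
    rw [norm_toLp_sq, inner_L]
    exact hcoer p (Lp.memLp p) hpχ hpe
  have hge_Lp (h : ⟪hg.toLp g, he.toLp e⟫_ℝ = 0) : he.toLp e = 0 := by
    rw [inner_toLp_toLp] at h
    rw [← norm_eq_zero, ← sq_eq_zero_iff, norm_toLp_sq, hge h]
  obtain ⟨η, hη, θ, hθ, H⟩ := exists_coercive_of_single_negative_direction hL hlam hν hχ_norm hLχ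
    hLe hL_coer ((inner_L hζ hζ).trans_lt hFζ) hge_Lp
  refine ⟨η, hη, θ, hθ, fun y hy => ?_⟩
  simpa only [inner_L, inner_toLp_toLp, Lp.norm_toLp] using H (hy.toLp y)

end Lp

section Convolution

theorem aestronglyMeasurable_convol_integrand {k f : ℝ → ℝ} (hk : AEStronglyMeasurable k)
    (hf : AEStronglyMeasurable f) :
    AEStronglyMeasurable (fun z : ℝ × ℝ => k (z.1 - z.2) * f z.2) (volume.prod volume) := by
  simpa [mul_comm] using
    hf.convolution_integrand (ContinuousLinearMap.mul ℝ ℝ) hk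

theorem integrable_convol_integrand {k f : ℝ → ℝ} (hk : Integrable k) (hf : Integrable f) :
    Integrable (fun z : ℝ × ℝ => k (z.1 - z.2) * f z.2) (volume.prod volume) := by
  simpa [mul_comm] using hf.convolution_integrand (ContinuousLinearMap.mul ℝ ℝ) hk

theorem integrable_convol {k f : ℝ → ℝ} (hk : Integrable k) (hf : Integrable f) :
    Integrable (convol k f) :=
  (integrable_convol_integrand hk hf).integral_prod_left

theorem integral_convol {k f : ℝ → ℝ} (hk : Integrable k) (hf : Integrable f) :
    ∫ x, convol k f x = (∫ x, k x) * ∫ x, f x := by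
  calc ∫ x, convol k f x = ∫ y, ∫ x, k (x - y) * f y :=
        integral_integral_swap (integrable_convol_integrand hk hf)
    _ = (∫ x, k x) * ∫ y, f y := by
        simp only [integral_mul_const, integral_sub_right_eq_self k, integral_const_mul]

theorem convol_sq_le_ae {k f : ℝ → ℝ} (hk : Integrable k) (hf : MemLp f 2) :
    ∀ᵐ x, convol k f x ^ 2 ≤ (∫ y, |k y|) * convol (fun y => |k y|) (fun y => f y ^ 2) x := by
  filter_upwards [(integrable_convol_integrand hk.abs hf.integrable_sq).prod_right_ae] with x hx
  simpa only [convol, integral_sub_left_eq_self (fun y => |k y|) volume x] using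
    sq_integral_mul_le (hk.comp_sub_left x) hf.1 hx

theorem memLp_convol {k f : ℝ → ℝ} (hk : Integrable k) (hf : MemLp f 2) :
    MemLp (convol k f) 2 := by
  have hmeas : AEStronglyMeasurable (convol k f) :=
    (aestronglyMeasurable_convol_integrand hk.1 hf.1).integral_prod_right'
  refine (memLp_two_iff_integrable_sq hmeas).2 <|
    ((integrable_convol hk.abs hf.integrable_sq).const_mul (∫ y, |k y|)).mono' (hmeas.pow 2) ?_
  filter_upwards [convol_sq_le_ae hk hf] with x hx
  rwa [Real.norm_of_nonneg (sq_nonneg _)]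

theorem norm_toLp_convol_le {k f : ℝ → ℝ} (hk : Integrable k) (hf : MemLp f 2) :
    ‖(memLp_convol hk hf).toLp (convol k f)‖ ≤ (∫ x, |k x|) * ‖hf.toLp f‖ := by
  refine le_of_sq_le_sq ?_ (by positivity)
  calc ‖(memLp_convol hk hf).toLp (convol k f)‖ ^ 2 = ∫ x, convol k f x ^ 2 := norm_toLp_sq _
    _ ≤ ∫ x, (∫ y, |k y|) * convol (fun y => |k y|) (fun y => f y ^ 2) x :=
        integral_mono_ae (memLp_convol hk hf).integrable_sq
          ((integrable_convol hk.abs hf.integrable_sq).const_mul _) (convol_sq_le_ae hk hf)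
    _ = ((∫ x, |k x|) * ‖hf.toLp f‖) ^ 2 := by
        rw [integral_const_mul, integral_convol hk.abs hf.integrable_sq, mul_pow, norm_toLp_sq]
        ring

theorem integral_convol_mul_of_even {k f g : ℝ → ℝ} (hk : Integrable k) (heven : k.Even)
    (hf : MemLp f 2) (hg : MemLp g 2) :
    ∫ x, convol k f x * g x = ∫ x, f x * convol k g x := by
  have hcomm (x y : ℝ) : k (x - y) = k (y - x) := by rw [← heven, neg_sub]
  have hint : Integrable (fun z : ℝ × ℝ => k (z.1 - z.2) * f z.2 * g z.1)
      (volume.prod volume) := by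
    refine ((integrable_convol_integrand hk.abs hf.integrable_sq).add
      (integrable_convol_integrand hk.abs hg.integrable_sq).swap).mono'
      ((aestronglyMeasurable_convol_integrand hk.1 hf.1).mul hg.1.comp_fst)
      (Eventually.of_forall fun z => ?_)
    simp only [Pi.add_apply, Function.comp_apply, Prod.fst_swap, Prod.snd_swap, hcomm z.2 z.1,
      Real.norm_eq_abs, abs_mul, mul_assoc, ← mul_add]
    gcongr
    nlinarith [sq_nonneg (|f z.2| - |g z.1|), sq_abs (f z.2), sq_abs (g z.1)]
  calc ∫ x, convol k f x * g x = ∫ x, ∫ y, k (x - y) * f y * g x := by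
        simp only [convol, integral_mul_const]
    _ = ∫ y, ∫ x, k (x - y) * f y * g x := integral_integral_swap hint
    _ = ∫ y, f y * convol k g y := by
        simp only [convol, ← integral_const_mul, hcomm, mul_assoc, mul_left_comm]

end Convolution

section DegasperisProcesi

open scoped InnerProductSpace

theorem even_qker : qker.Even := fun x => by rw [qker, qker, abs_neg]

theorem integral_qker : ∫ x, qker x = 1 / 4 := by
  have hexp : ∫ x in Set.Ioi (0 : ℝ), exp (-(2 * x)) = 1 / 2 := by
    simpa using integral_exp_mul_Ioi (a := -2) (by norm_num) 0
  simp only [qker, integral_comp_abs (f := fun x => 1 / 4 * exp (-(2 * x))), integral_const_mul,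
    hexp]
  norm_num

theorem integrable_qker : Integrable qker :=
  .of_integral_ne_zero (by rw [integral_qker]; norm_num)

theorem integral_abs_qker : ∫ x, |qker x| = 1 / 4 := by
  rw [← integral_qker]
  exact integral_congr_ae (.of_forall fun x => abs_of_nonneg (by unfold qker; positivity))

theorem memLp_sub_convol_qker {f : ℝ → ℝ} (hf : MemLp f 2) :
    MemLp (fun x => f x - 3 * convol qker f x) 2 :=
  hf.sub ((memLp_convol integrable_qker hf).const_mul 3)

theorem integral_sq_div_four_le_integral_sub_convol_qker_mul {f : ℝ → ℝ} (hf : MemLp f 2) :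
    (∫ x, f x ^ 2) / 4 ≤ ∫ x, (f x - 3 * convol qker f x) * f x := by
  have hq := memLp_convol integrable_qker hf
  have hqf : ⟪hq.toLp _, hf.toLp f⟫_ℝ ≤ 1 / 4 * ‖hf.toLp f‖ ^ 2 := by
    calc ⟪hq.toLp _, hf.toLp f⟫_ℝ ≤ ‖hq.toLp _‖ * ‖hf.toLp f‖ := real_inner_le_norm _ _
      _ ≤ 1 / 4 * ‖hf.toLp f‖ * ‖hf.toLp f‖ := by
          gcongr
          exact integral_abs_qker ▸ norm_toLp_convol_le integrable_qker hf
      _ = 1 / 4 * ‖hf.toLp f‖ ^ 2 := by ring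
  have hsub : (memLp_sub_convol_qker hf).toLp _ = hf.toLp f - (3 : ℝ) • hq.toLp _ := rfl
  rw [← inner_toLp_toLp (memLp_sub_convol_qker hf) hf, hsub, inner_sub_left, inner_smul_left,
    real_inner_self_eq_norm_sq, ← norm_toLp_sq hf, conj_trivial]
  linarith

/-- The linearized operator `𝓛 = -φ - 2κ(4 - ∂ₓ²)⁻¹ + c(1 - ∂ₓ²)(4 - ∂ₓ²)⁻¹`, acting pointwise on
functions so that it can be applied both to representatives and to `L²` classes. -/
def dpLinearization (κ c : ℝ) (φ f : ℝ → ℝ) (x : ℝ) : ℝ :=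
  -(φ x) * f x - 2 * κ * convol qker f x + c * (f x - 3 * convol qker f x)

theorem memLp_dpLinearization {κ c : ℝ} {φ f : ℝ → ℝ} (hφ : AEStronglyMeasurable φ)
    (hbdd : ∃ M, ∀ x, |φ x| ≤ M) (hf : MemLp f 2) : MemLp (dpLinearization κ c φ f) 2 := by
  have hφf : MemLp (fun x => -(φ x) * f x) 2 :=
    memLp_mul_of_bounded hφ.neg (by simpa only [abs_neg] using hbdd) hf
  exact (hφf.sub ((memLp_convol integrable_qker hf).const_mul (2 * κ))).add
    ((memLp_sub_convol_qker hf).const_mul c)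

theorem integral_dpLinearization_mul {κ c : ℝ} {φ f g : ℝ → ℝ} (hφ : AEStronglyMeasurable φ)
    (hbdd : ∃ M, ∀ x, |φ x| ≤ M) (hf : MemLp f 2) (hg : MemLp g 2) :
    ∫ x, dpLinearization κ c φ f x * g x = ∫ x, f x * dpLinearization κ c φ g x := by
  have hfg : Integrable (fun x => (c - φ x) * (f x * g x)) := by
    have := (hf.const_mul c).sub (memLp_mul_of_bounded hφ hbdd hf)
    refine (this.integrable_mul hg).congr (.of_forall fun x => ?_)
    simp only [Pi.mul_apply, Pi.sub_apply]
    ring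
  have hqf : Integrable fun x => convol qker f x * g x :=
    (memLp_convol integrable_qker hf).integrable_mul hg
  have hqg : Integrable fun x => f x * convol qker g x :=
    hf.integrable_mul (memLp_convol integrable_qker hg)
  calc ∫ x, dpLinearization κ c φ f x * g x
      = ∫ x, ((c - φ x) * (f x * g x) - (2 * κ + 3 * c) * (convol qker f x * g x)) := by
        congr with x; rw [dpLinearization]; ring
    _ = ∫ x, ((c - φ x) * (f x * g x) - (2 * κ + 3 * c) * (f x * convol qker g x)) := by
        rw [integral_sub hfg (hqf.const_mul _), integral_sub hfg (hqg.const_mul _),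
          integral_const_mul, integral_const_mul,
          integral_convol_mul_of_even integrable_qker even_qker hf hg]
    _ = ∫ x, f x * dpLinearization κ c φ g x := by
        congr with x; rw [dpLinearization]; ring

theorem stmt_5_general (κ c : ℝ) (φ : ℝ → ℝ) (hφmeas : AEStronglyMeasurable φ volume)
    (hφbdd : ∃ M, ∀ x, |φ x| ≤ M) (hφ'L2 : MemLp (deriv φ) 2 volume)
    (Lop : (ℝ → ℝ) → (ℝ → ℝ))
    (hLop : ∀ f x, Lop f x
      = -(φ x) * f x - 2 * κ * convol qker f x + c * (f x - 3 * convol qker f x))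
    (hker : ∀ x, Lop (deriv φ) x = 0)
    (lam : ℝ) (hlam : 0 < lam)
    (χ : ℝ → ℝ) (hχL2 : MemLp χ 2 volume) (hχnorm : ∫ x, χ x ^ 2 = 1)
    (hχeig : ∀ x, Lop χ x = -lam * χ x)
    (lambar : ℝ) (hlambar : 0 < lambar)
    (hcoer : ∀ p : ℝ → ℝ, MemLp p 2 volume →
      (∫ x, p x * χ x) = 0 → (∫ x, p x * deriv φ x) = 0 →
      lambar * ∫ x, p x ^ 2 ≤ ∫ x, Lop p x * p x)
    (ζ : ℝ → ℝ) (hζL2 : MemLp ζ 2 volume)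
    (hζeq : ∀ x, Lop ζ x = -(φ x - 3 * convol qker φ x))
    (hζneg : (∫ x, Lop ζ x * ζ x) < 0) :
    ∃ η > 0, ∃ θ > 0, ∀ y : ℝ → ℝ, MemLp y 2 volume →
      |∫ x, y x * (φ x - 3 * convol qker φ x)|
        + |∫ x, y x * (deriv φ x - 3 * convol qker (deriv φ) x)|
        ≤ η * (eLpNorm y 2 volume).toReal →
      θ * ((eLpNorm y 2 volume).toReal) ^ 2 ≤ ∫ x, Lop y x * y x := by
  obtain rfl : Lop = dpLinearization κ c φ := funext₂ hLop
  have hS_pos := integral_sq_div_four_le_integral_sub_convol_qker_mul hφ'L2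
  obtain ⟨η, hη, θ, hθ, H⟩ := exists_integral_coercive_of_single_negative_direction
    (memLp_dpLinearization hφmeas hφbdd) (integral_dpLinearization_mul hφmeas hφbdd)
    hχL2 hφ'L2 hζL2 (memLp_sub_convol_qker hφ'L2) hlam hlambar hχnorm (.of_forall hχeig)
    (.of_forall hker) hcoer hζneg fun h =>
      le_antisymm (by linarith) (integral_nonneg fun x => sq_nonneg _)
  refine ⟨η, hη, θ, hθ, fun y hy hle => H y hy (le_of_eq_of_le ?_ hle)⟩
  simp only [hζeq, neg_mul, integral_neg, abs_neg, mul_comm (y _)]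

end DegasperisProcesi

/-- coercivity of the linearized quadratic form.  Under the spectral
hypotheses (i)–(v) on `𝓛f = -φf - 2κ q*f + c(f - 3q*f)`, vectors `y ∈ L²` that
are almost orthogonal (in the `S`-inner product) to `φ` and `φ'` satisfy
`(𝓛y, y) ≥ θ‖y‖²`. -/
theorem stmt_5 (κ c : ℝ) (hκ : 0 < κ) (hc : 2*κ < c)
    (φ : ℝ → ℝ) (hφcont : Continuous φ) (hφbdd : ∃ M, ∀ x, |φ x| ≤ M)
    (hφ'L2 : MemLp (deriv φ) 2 volume) (hφ'ne : ∃ x, deriv φ x ≠ 0)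
    (Lop : (ℝ → ℝ) → (ℝ → ℝ))
    (hLop : ∀ f x, Lop f x
      = -(φ x) * f x - 2*κ * convol qker f x + c * (f x - 3 * convol qker f x))
    -- (i) 𝓛φ' = 0
    (hker : ∀ x, Lop (deriv φ) x = 0)
    -- (ii) a negative simple eigenvalue -λ̲ with normalized eigenfunction χ
    (lam : ℝ) (hlam : 0 < lam)
    (χ : ℝ → ℝ) (hχL2 : MemLp χ 2 volume) (hχnorm : (∫ x, (χ x)^2) = 1)
    (hχeig : ∀ x, Lop χ x = -lam * χ x)
    -- (iii) coercivity on the orthogonal complement of span{χ, φ'}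
    (lambar : ℝ) (hlambar : 0 < lambar)
    (hcoer : ∀ p : ℝ → ℝ, MemLp p 2 volume →
      (∫ x, p x * χ x) = 0 → (∫ x, p x * deriv φ x) = 0 →
      lambar * (∫ x, (p x)^2) ≤ ∫ x, Lop p x * p x)
    -- (iv) invariance of X₊ = (span{χ, φ'})^⊥ under 𝓛
    (hinv : ∀ f : ℝ → ℝ, MemLp f 2 volume →
      (∫ x, f x * χ x) = 0 → (∫ x, f x * deriv φ x) = 0 →
      (∫ x, Lop f x * χ x) = 0 ∧ (∫ x, Lop f x * deriv φ x) = 0)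
    -- (v) 𝓛ζ = -(φ - 3q*φ) with (𝓛ζ, ζ) < 0
    (ζ : ℝ → ℝ) (hζL2 : MemLp ζ 2 volume)
    (hζeq : ∀ x, Lop ζ x = -(φ x - 3 * convol qker φ x))
    (hζneg : (∫ x, Lop ζ x * ζ x) < 0) :
    ∃ η > 0, ∃ θ > 0, ∀ y : ℝ → ℝ, MemLp y 2 volume →
      |∫ x, y x * (φ x - 3 * convol qker φ x)|
        + |∫ x, y x * (deriv φ x - 3 * convol qker (deriv φ) x)|
        ≤ η * (eLpNorm y 2 volume).toReal →
      θ * ((eLpNorm y 2 volume).toReal)^2 ≤ ∫ x, Lop y x * y x := by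
  exact stmt_5_general κ c φ hφcont.aestronglyMeasurable hφbdd hφ'L2 Lop hLop hker lam hlam χ hχL2
    hχnorm hχeig lambar hlambar hcoer ζ hζL2 hζeq hζneg
end
end

section
/- Let B ≥ 2 and define ψ : ℝ → ℝ by ψ(x) = (2/π) arctan( e^{x/B} ). Then: 0 < ψ(x) < 1 for all x; ψ is strictly increasing (ψ'(x) > 0 for all x); for all x ∈ ℝ, |ψ''''(x)| ≤ (3/B³) ψ'(x), |ψ'''(x)| ≤ (1/B²) ψ'(x), and ψ''(x) ≤ (1/B) ψ'(x); and there exists an absolute constant C > 0 (independent of B) such that |ψ^{(k)}(x)| ≤ C e^{−|x|/B} for k = 1, 2, 3, 4 and all x ∈ ℝ. -/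
open MeasureTheory Real Filter

noncomputable section

/-! The weight is a dilation of the single profile `Ψ(y) = (2/π) arctan(e^y)`, and
`Ψ' = 1/(π cosh)`. Since `cosh' = tanh · cosh` and `tanh' = 1 - tanh²`, every higher derivative of
`Ψ` is `Ψ'` times a polynomial in `tanh`; the bounds `|tanh| < 1` and `e^|y| ≤ 2 cosh y` then give
all the estimates, with a factor `B⁻¹` gained from each differentiation. -/

section Dilation

variable {𝕜 : Type*} [NontriviallyNormedField 𝕜] {f : 𝕜 → 𝕜}

lemma iteratedDeriv_comp_div_const {k : ℕ} (hf : ContDiff 𝕜 k f) (c x : 𝕜) :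
    iteratedDeriv k (fun x ↦ f (x / c)) x = iteratedDeriv k f (x / c) / c ^ k := by
  simpa only [div_eq_inv_mul, inv_pow] using congrFun (iteratedDeriv_comp_const_mul hf c⁻¹) x

lemma deriv_comp_div_const (c x : 𝕜) :
    deriv (fun x ↦ f (x / c)) x = deriv f (x / c) / c := by
  simpa only [div_eq_inv_mul, smul_eq_mul, mul_comm] using deriv_comp_mul_left c⁻¹ f x

end Dilation

lemma abs_iteratedDeriv_succ_comp_div_const_le {f : ℝ → ℝ} {k : ℕ} {a B x : ℝ}
    (hf : ContDiff ℝ (k + 1 : ℕ) f) (hB : 0 < B)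
    (h : |iteratedDeriv (k + 1) f (x / B)| ≤ a * deriv f (x / B)) :
    |iteratedDeriv (k + 1) (fun x ↦ f (x / B)) x| ≤ a / B ^ k * deriv (fun x ↦ f (x / B)) x := by
  rw [iteratedDeriv_comp_div_const hf, deriv_comp_div_const, abs_div,
    abs_of_pos (pow_pos hB _)]
  calc |iteratedDeriv (k + 1) f (x / B)| / B ^ (k + 1)
      ≤ a * deriv f (x / B) / B ^ (k + 1) := by gcongr
    _ = a / B ^ k * (deriv f (x / B) / B) := by rw [pow_succ, div_mul_div_comm]

lemma hasDerivAt_tanh_s17 (y : ℝ) : HasDerivAt tanh (1 - tanh y ^ 2) y := by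
  have hcosh : cosh y ≠ 0 := (cosh_pos y).ne'
  have hquot := (hasDerivAt_sinh y).fun_div (hasDerivAt_cosh y) hcosh
  simp only [← tanh_eq_sinh_div_cosh] at hquot
  refine hquot.congr_deriv ?_
  rw [tanh_eq_sinh_div_cosh]
  field_simp

lemma inv_cosh_le_two_mul_exp_neg_abs (y : ℝ) : (cosh y)⁻¹ ≤ 2 * exp (-|y|) := by
  have hexp : exp |y| / 2 ≤ cosh y := by
    rw [cosh_eq]
    gcongr
    exact exp_abs_le y
  calc (cosh y)⁻¹ ≤ (exp |y| / 2)⁻¹ := inv_anti₀ (by positivity) hexp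
    _ = 2 * exp (-|y|) := by rw [inv_div, exp_neg, div_eq_mul_inv]

lemma abs_two_mul_sq_sub_one_le {t : ℝ} (ht : |t| ≤ 1) : |2 * t ^ 2 - 1| ≤ 1 := by
  have hsq : t ^ 2 ≤ 1 := (sq_le_one_iff_abs_le_one t).mpr ht
  rw [abs_le]
  constructor <;> linarith [sq_nonneg t]

lemma five_mul_sub_six_mul_cube_le {t : ℝ} (ht : |t| ≤ 1) : 5 * t - 6 * t ^ 3 ≤ 2 := by
  obtain ⟨hlower, hupper⟩ := abs_le.mp ht
  have hfactor : 0 ≤ (t + 1) * (2 * t - 1) ^ 2 := mul_nonneg (by linarith) (sq_nonneg _)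
  linarith

lemma abs_five_mul_sub_six_mul_cube_le {t : ℝ} (ht : |t| ≤ 1) : |5 * t - 6 * t ^ 3| ≤ 2 := by
  have hneg := five_mul_sub_six_mul_cube_le ((abs_neg t).trans_le ht)
  exact abs_le.mpr ⟨by linarith, five_mul_sub_six_mul_cube_le ht⟩

/-- The profile `Ψ(y) = (2/π) arctan(e^y)` of the localizing weights: the weight at scale `B` is
`x ↦ Ψ(x/B)`. -/
def arctanExpWeight (y : ℝ) : ℝ := 2 / π * arctan (exp y)

namespace arctanExpWeight

protected lemma pos (y : ℝ) : 0 < arctanExpWeight y :=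
  mul_pos (by positivity) (arctan_pos.mpr (exp_pos y))

protected lemma lt_one (y : ℝ) : arctanExpWeight y < 1 := by
  calc arctanExpWeight y < 2 / π * (π / 2) :=
        mul_lt_mul_of_pos_left (arctan_lt_pi_div_two _) (by positivity)
    _ = 1 := by field_simp

protected lemma contDiff {n : WithTop ℕ∞} : ContDiff ℝ n arctanExpWeight :=
  contDiff_const.mul (contDiff_arctan.comp contDiff_exp)

lemma deriv_eq (y : ℝ) : deriv arctanExpWeight y = π⁻¹ * (cosh y)⁻¹ := by
  have hderiv : HasDerivAt arctanExpWeight (2 / π * (1 / (1 + exp y ^ 2) * exp y)) y :=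
    (hasDerivAt_exp y).arctan.const_mul (2 / π)
  rw [hderiv.deriv, cosh_eq, exp_neg]
  field_simp
  ring

lemma deriv_pos (y : ℝ) : 0 < deriv arctanExpWeight y := by
  rw [deriv_eq]
  exact mul_pos (inv_pos.mpr pi_pos) (inv_pos.mpr (cosh_pos y))

lemma deriv_le (y : ℝ) : deriv arctanExpWeight y ≤ 2 / π * exp (-|y|) := by
  calc deriv arctanExpWeight y = π⁻¹ * (cosh y)⁻¹ := deriv_eq y
    _ ≤ π⁻¹ * (2 * exp (-|y|)) := by gcongr; exact inv_cosh_le_two_mul_exp_neg_abs y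
    _ = 2 / π * exp (-|y|) := by ring

lemma hasDerivAt_deriv (y : ℝ) :
    HasDerivAt (deriv arctanExpWeight) (-tanh y * deriv arctanExpWeight y) y := by
  have hinv := ((hasDerivAt_cosh y).fun_inv (cosh_pos y).ne').const_mul π⁻¹
  rw [← funext deriv_eq] at hinv
  refine hinv.congr_deriv ?_
  rw [deriv_eq, tanh_eq_sinh_div_cosh]
  field_simp

lemma deriv_comp_tanh_mul_deriv {u u' : ℝ → ℝ} (hu : ∀ t, HasDerivAt u (u' t) t) :
    deriv (fun y ↦ u (tanh y) * deriv arctanExpWeight y) =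
      fun y ↦ ((1 - tanh y ^ 2) * u' (tanh y) - tanh y * u (tanh y)) *
        deriv arctanExpWeight y := by
  funext y
  have hcomp : HasDerivAt (fun y ↦ u (tanh y)) (u' (tanh y) * (1 - tanh y ^ 2)) y :=
    (hu (tanh y)).comp y (hasDerivAt_tanh_s17 y)
  rw [(hcomp.fun_mul (hasDerivAt_deriv y)).deriv]
  ring

lemma iteratedDeriv_two_eq : iteratedDeriv 2 arctanExpWeight =
    fun y ↦ -tanh y * deriv arctanExpWeight y := by
  rw [iteratedDeriv_succ, iteratedDeriv_one]
  exact funext fun y ↦ (hasDerivAt_deriv y).deriv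

lemma iteratedDeriv_three_eq : iteratedDeriv 3 arctanExpWeight =
    fun y ↦ (2 * tanh y ^ 2 - 1) * deriv arctanExpWeight y := by
  rw [iteratedDeriv_succ, iteratedDeriv_two_eq, deriv_comp_tanh_mul_deriv hasDerivAt_neg]
  funext y
  ring

lemma iteratedDeriv_four_eq : iteratedDeriv 4 arctanExpWeight =
    fun y ↦ (5 * tanh y - 6 * tanh y ^ 3) * deriv arctanExpWeight y := by
  have hpoly (t : ℝ) : HasDerivAt (fun t : ℝ ↦ 2 * t ^ 2 - 1) (4 * t) t :=
    (((hasDerivAt_pow 2 t).const_mul 2).sub_const 1).congr_deriv (by norm_num; ring)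
  rw [iteratedDeriv_succ, iteratedDeriv_three_eq, deriv_comp_tanh_mul_deriv hpoly]
  funext y
  ring

lemma abs_mul_deriv_le {a b : ℝ} (y : ℝ) (hab : |a| ≤ b) :
    |a * deriv arctanExpWeight y| ≤ b * deriv arctanExpWeight y := by
  rw [abs_mul, abs_of_pos (deriv_pos y)]
  exact mul_le_mul_of_nonneg_right hab (deriv_pos y).le

lemma abs_iteratedDeriv_two_le (y : ℝ) :
    |iteratedDeriv 2 arctanExpWeight y| ≤ deriv arctanExpWeight y := by
  rw [iteratedDeriv_two_eq]
  simpa only [one_mul] using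
    abs_mul_deriv_le y ((abs_neg _).trans_le (abs_tanh_lt_one y).le)

lemma abs_iteratedDeriv_three_le (y : ℝ) :
    |iteratedDeriv 3 arctanExpWeight y| ≤ deriv arctanExpWeight y := by
  rw [iteratedDeriv_three_eq]
  simpa only [one_mul] using
    abs_mul_deriv_le y (abs_two_mul_sq_sub_one_le (abs_tanh_lt_one y).le)

lemma abs_iteratedDeriv_four_le (y : ℝ) :
    |iteratedDeriv 4 arctanExpWeight y| ≤ 2 * deriv arctanExpWeight y := by
  rw [iteratedDeriv_four_eq]
  exact abs_mul_deriv_le y (abs_five_mul_sub_six_mul_cube_le (abs_tanh_lt_one y).le)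

lemma abs_iteratedDeriv_le_exp {k : ℕ} (hk₁ : 1 ≤ k) (hk₄ : k ≤ 4) (y : ℝ) :
    |iteratedDeriv k arctanExpWeight y| ≤ 4 / π * exp (-|y|) := by
  have hderiv := deriv_pos y
  have hk : |iteratedDeriv k arctanExpWeight y| ≤ 2 * deriv arctanExpWeight y := by
    interval_cases k
    · rw [iteratedDeriv_one, abs_of_pos hderiv]
      linarith
    · linarith [abs_iteratedDeriv_two_le y]
    · linarith [abs_iteratedDeriv_three_le y]
    · exact abs_iteratedDeriv_four_le y
  calc |iteratedDeriv k arctanExpWeight y| ≤ 2 * deriv arctanExpWeight y := hk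
    _ ≤ 2 * (2 / π * exp (-|y|)) := by gcongr; exact deriv_le y
    _ = 4 / π * exp (-|y|) := by ring

lemma abs_iteratedDeriv_comp_div_le_exp {k : ℕ} (hk₁ : 1 ≤ k) (hk₄ : k ≤ 4) {B : ℝ} (hB : 0 < B)
    (x : ℝ) :
    |iteratedDeriv k (fun x ↦ arctanExpWeight (x / B)) x| ≤ 4 / π / B ^ k * exp (-|x| / B) := by
  rw [iteratedDeriv_comp_div_const arctanExpWeight.contDiff, abs_div,
    abs_of_pos (pow_pos hB k), div_mul_eq_mul_div]
  gcongr
  simpa only [abs_div, abs_of_pos hB, neg_div] using abs_iteratedDeriv_le_exp hk₁ hk₄ (x / B)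

end arctanExpWeight

theorem stmt_17_general :
    ∃ C > 0, ∀ B : ℝ, 0 < B →
      ∀ ψ : ℝ → ℝ, (∀ x, ψ x = (2/π) * Real.arctan (Real.exp (x/B))) →
        (∀ x, 0 < ψ x ∧ ψ x < 1) ∧
        StrictMono ψ ∧
        (∀ x, 0 < deriv ψ x) ∧
        (∀ x, |iteratedDeriv 4 ψ x| ≤ (2/B^3) * deriv ψ x) ∧
        (∀ x, |iteratedDeriv 3 ψ x| ≤ (1/B^2) * deriv ψ x) ∧
        (∀ x, |iteratedDeriv 2 ψ x| ≤ (1/B) * deriv ψ x) ∧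
        (∀ k : ℕ, 1 ≤ k → k ≤ 4 → ∀ x,
          |iteratedDeriv k ψ x| ≤ C / B^k * Real.exp (-|x|/B)) := by
  refine ⟨4 / π, by positivity, fun B hB ψ hψ ↦ ?_⟩
  obtain rfl : ψ = fun x ↦ arctanExpWeight (x / B) := funext hψ
  have hderiv (x : ℝ) : 0 < deriv (fun x ↦ arctanExpWeight (x / B)) x := by
    rw [deriv_comp_div_const]
    exact div_pos (arctanExpWeight.deriv_pos _) hB
  refine ⟨fun x ↦ ⟨arctanExpWeight.pos _, arctanExpWeight.lt_one _⟩,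
    strictMono_of_deriv_pos hderiv, hderiv, fun x ↦ ?four, fun x ↦ ?three, fun x ↦ ?two,
    fun k hk₁ hk₄ ↦ arctanExpWeight.abs_iteratedDeriv_comp_div_le_exp hk₁ hk₄ hB⟩
  case four =>
    exact abs_iteratedDeriv_succ_comp_div_const_le arctanExpWeight.contDiff hB
      (arctanExpWeight.abs_iteratedDeriv_four_le _)
  case three =>
    exact abs_iteratedDeriv_succ_comp_div_const_le arctanExpWeight.contDiff hB
      (by simpa only [one_mul] using arctanExpWeight.abs_iteratedDeriv_three_le _)
  case two =>
    simpa only [pow_one] using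
      abs_iteratedDeriv_succ_comp_div_const_le (k := 1) (a := 1) arctanExpWeight.contDiff hB
        (by simpa only [one_mul] using arctanExpWeight.abs_iteratedDeriv_two_le (x / B))

/-- properties of the localizing weight `ψ(x) = (2/π)arctan(e^{x/B})`
for `B ≥ 2`: values in `(0,1)`, strict monotonicity, the derivative bounds
`|ψ''''| ≤ (3/B³)ψ'`, `|ψ'''| ≤ (1/B²)ψ'`, `ψ'' ≤ (1/B)ψ'`, and exponential decay
`|ψ^{(k)}(x)| ≤ C e^{-|x|/B}` (`k = 1,…,4`) with `C` independent of `B`. -/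
theorem stmt_17 :
    ∃ C > 0, ∀ B : ℝ, 2 ≤ B →
      ∀ ψ : ℝ → ℝ, (∀ x, ψ x = (2/π) * Real.arctan (Real.exp (x/B))) →
        (∀ x, 0 < ψ x ∧ ψ x < 1) ∧
        StrictMono ψ ∧
        (∀ x, 0 < deriv ψ x) ∧
        (∀ x, |iteratedDeriv 4 ψ x| ≤ (3/B^3) * deriv ψ x) ∧
        (∀ x, |iteratedDeriv 3 ψ x| ≤ (1/B^2) * deriv ψ x) ∧
        (∀ x, iteratedDeriv 2 ψ x ≤ (1/B) * deriv ψ x) ∧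
        (∀ k : ℕ, 1 ≤ k → k ≤ 4 → ∀ x, |iteratedDeriv k ψ x| ≤ C * Real.exp (-|x|/B)) := by
  obtain ⟨C, hC, hgeneral⟩ := stmt_17_general
  refine ⟨C, hC, fun B hB ψ hψ ↦ ?_⟩
  obtain ⟨hmem, hmono, hpos, hfour, hthree, htwo, hdecay⟩ := hgeneral B (by linarith) ψ hψ
  refine ⟨hmem, hmono, hpos, fun x ↦ (hfour x).trans ?_, hthree,
    fun x ↦ (le_abs_self _).trans (htwo x), fun k hk₁ hk₄ x ↦ (hdecay k hk₁ hk₄ x).trans ?_⟩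
  · exact mul_le_mul_of_nonneg_right (by gcongr; norm_num) (hpos x).le
  · gcongr
    exact div_le_self hC.le (one_le_pow₀ (by linarith))
end
end

section
/- Let B > 1 and let ψ : ℝ → ℝ be a smooth function whose derivatives ψ', ψ'', ψ''', ψ^{(5)} decay at infinity, with ψ'(x) > 0 and |ψ'''(x)| ≤ (1/B²) ψ'(x) for all x. Let u be a Schwartz function on ℝ, and set û = q * u with q(x) = ¼e^{−2|x|}, and r = p * û with p(x) = ½e^{−|x|}. Then the identity ∫_ℝ û² ψ' dx = ∫_ℝ ( r² + 2 (r')² + (r'')² ) ψ' dx − ∫_ℝ r² ψ''' dx holds, and consequently ∫_ℝ û² ψ' dx ≥ ( 1 − 1/B² ) ∫_ℝ r² ψ' dx. -/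
open MeasureTheory Real Filter Finset
open scoped ENNReal

noncomputable section

/-! With `r = p * f` one has `f = r - r''`, and `p * f` is half the sum of the causal and the
anticausal exponential averages of `f`.  Each average solves a first-order linear equation with
source `f`, which gives `r'` and `r''`, and each is bounded on `L²` by Jensen's inequality.  The
coercivity identity then says that `(2 r r' w - r² w')' = 2 (r r'' + r'²) w - r² w''` has integral
zero, with `w = ψ'`. -/

section ImproperIntegral

variable {E : Type*} [NormedAddCommGroup E] [NormedSpace ℝ E] [CompleteSpace E]

theorem hasDerivAt_integral_Iic {g : ℝ → E} (hg : Continuous g)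
    (hint : ∀ x, IntegrableOn g (Set.Iic x)) (x : ℝ) :
    HasDerivAt (fun z => ∫ y in Set.Iic z, g y) (g x) x := by
  have split_at_zero : (fun z => ∫ y in Set.Iic z, g y) =
      fun z => (∫ y in (0 : ℝ)..z, g y) + ∫ y in Set.Iic 0, g y := by
    funext z
    rw [← intervalIntegral.integral_Iic_sub_Iic (hint 0) (hint z), sub_add_cancel]
  rw [split_at_zero]
  exact (hg.integral_hasStrictDerivAt 0 x).hasDerivAt.add_const _

end ImproperIntegral

theorem memLp_top_of_tendsto_cocompact {X E : Type*} [TopologicalSpace X] [MeasurableSpace X]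
    [OpensMeasurableSpace X] [NormedAddCommGroup E] [SecondCountableTopologyEither X E]
    {μ : Measure X} {g : X → E} (hg : Continuous g) (hlim : Tendsto g (cocompact X) (nhds 0)) :
    MemLp g ∞ μ := by
  let g₀ : ZeroAtInftyContinuousMap X E := ⟨⟨g, hg⟩, hlim⟩
  exact memLp_top_of_bound hg.aestronglyMeasurable _ (ae_of_all _ g₀.toBCF.norm_coe_le_norm)

section ExponentialAverages

variable {a : ℝ} {f : ℝ → ℝ}

/-- The causal exponential average of `f` at rate `a`: the convolution of `f` with
`t ↦ e^{-at}` on `t ≥ 0`.  It is left unnormalized; the total weight is `1 / a`. -/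
def expPast (a : ℝ) (f : ℝ → ℝ) (x : ℝ) : ℝ :=
  ∫ y in Set.Iic x, Real.exp (-(a * (x - y))) * f y

/-- The anticausal exponential average of `f` at rate `a`, the mirror image of `expPast`. -/
def expFuture (a : ℝ) (f : ℝ → ℝ) (x : ℝ) : ℝ :=
  ∫ y in Set.Ioi x, Real.exp (-(a * (y - x))) * f y

theorem expFuture_eq_expPast_comp_neg (a : ℝ) (f : ℝ → ℝ) :
    expFuture a f = fun x => expPast a (fun y => f (-y)) (-x) := by
  funext x
  have reflect := integral_comp_neg_Iic (-x) fun y => Real.exp (-(a * (y - x))) * f y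
  rw [neg_neg] at reflect
  rw [expFuture, ← reflect, expPast]
  congr! 6
  ring

theorem exp_neg_mul_sub (a x y : ℝ) :
    Real.exp (-(a * (x - y))) = Real.exp (-(a * x)) * Real.exp (a * y) := by
  rw [← Real.exp_add]
  ring_nf

theorem expPast_eq_exp_mul_integral (a : ℝ) (f : ℝ → ℝ) (x : ℝ) :
    expPast a f x = Real.exp (-(a * x)) * ∫ y in Set.Iic x, Real.exp (a * y) * f y := by
  simp only [expPast, exp_neg_mul_sub, mul_assoc, integral_const_mul]

theorem integrableOn_exp_neg_mul_sub (ha : 0 < a) (x : ℝ) :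
    IntegrableOn (fun y => Real.exp (-(a * (x - y)))) (Set.Iic x) := by
  simp only [exp_neg_mul_sub]
  exact (integrableOn_exp_mul_Iic ha x).const_mul _

theorem integral_exp_neg_mul_sub (ha : 0 < a) (x : ℝ) :
    ∫ y in Set.Iic x, Real.exp (-(a * (x - y))) = 1 / a := by
  simp only [exp_neg_mul_sub, integral_const_mul, integral_exp_mul_Iic ha]
  rw [mul_div_assoc', ← Real.exp_add, neg_add_cancel, Real.exp_zero]

theorem memLp_two_exp_mul_Iic (ha : 0 < a) (x : ℝ) :
    MemLp (fun y => Real.exp (a * y)) 2 (volume.restrict (Set.Iic x)) := by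
  rw [memLp_two_iff_integrable_sq (by fun_prop)]
  refine (integrableOn_exp_mul_Iic (mul_pos two_pos ha) x).congr_fun (fun y _ => ?_)
    measurableSet_Iic
  rw [← Real.exp_nat_mul]
  push_cast
  ring_nf

theorem integrableOn_exp_mul_of_memLp_two (ha : 0 < a) (hf : MemLp f 2) (x : ℝ) :
    IntegrableOn (fun y => Real.exp (a * y) * f y) (Set.Iic x) :=
  (memLp_two_exp_mul_Iic ha x).integrable_mul (hf.restrict _)

theorem integrableOn_expPast_integrand (ha : 0 < a) (hf : MemLp f 2) (x : ℝ) :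
    IntegrableOn (fun y => Real.exp (-(a * (x - y))) * f y) (Set.Iic x) := by
  simp only [exp_neg_mul_sub, mul_assoc]
  exact (integrableOn_exp_mul_of_memLp_two ha hf x).const_mul _

theorem integrableOn_expFuture_integrand (ha : 0 < a) (hf : MemLp f 2) (x : ℝ) :
    IntegrableOn (fun y => Real.exp (-(a * (y - x))) * f y) (Set.Ioi x) := by
  have hpast := integrableOn_expPast_integrand ha
    (hf.comp_measurePreserving (Measure.measurePreserving_neg volume)) (-x)
  rw [integrableOn_Iic_iff_integrableOn_Iio] at hpast
  convert hpast.comp_neg_Ioi using 4 with y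
  · ring
  · simp

theorem hasDerivAt_expPast (ha : 0 < a) (hfc : Continuous f) (hf : MemLp f 2) (x : ℝ) :
    HasDerivAt (expPast a f) (f x - a * expPast a f x) x := by
  have hexp : HasDerivAt (fun z : ℝ => Real.exp (-(a * z))) (Real.exp (-(a * x)) * -(a * 1)) x :=
    ((hasDerivAt_id x).const_mul a).neg.exp
  have hint := hasDerivAt_integral_Iic (g := fun y => Real.exp (a * y) * f y) (by fun_prop)
    (integrableOn_exp_mul_of_memLp_two ha hf) x
  have hcancel : Real.exp (-(a * x)) * Real.exp (a * x) = 1 := by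
    rw [← Real.exp_add, neg_add_cancel, Real.exp_zero]
  rw [funext (expPast_eq_exp_mul_integral a f)]
  refine (hexp.mul hint).congr_deriv ?_
  linear_combination f x * hcancel

theorem hasDerivAt_expFuture (ha : 0 < a) (hfc : Continuous f) (hf : MemLp f 2) (x : ℝ) :
    HasDerivAt (expFuture a f) (a * expFuture a f x - f x) x := by
  have hpast := hasDerivAt_expPast ha (hfc.comp continuous_neg)
    (hf.comp_measurePreserving (Measure.measurePreserving_neg volume)) (-x)
  rw [expFuture_eq_expPast_comp_neg]
  refine (hpast.comp x (hasDerivAt_neg x)).congr_deriv ?_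
  simp only [Function.comp_def, neg_neg]
  ring

theorem integrable_expPast (ha : 0 < a) (hf : Integrable f) : Integrable (expPast a f) := by
  have hkernel : Integrable ((Set.Ici 0).indicator fun t => Real.exp (-(a * t))) := by
    rw [integrable_indicator_iff measurableSet_Ici, integrableOn_Ici_iff_integrableOn_Ioi]
    simpa only [neg_mul] using exp_neg_integrableOn_Ioi 0 ha
  refine (hkernel.integrable_convolution (ContinuousLinearMap.mul ℝ ℝ) hf).congr
    (ae_of_all _ fun x => ?_)
  rw [convolution_mul_swap, expPast, ← integral_indicator measurableSet_Iic]
  refine integral_congr_ae (ae_of_all _ fun y => ?_)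
  simp [Set.indicator]

/-- Jensen's inequality, as nonnegativity of the variance of `f` about its weighted mean
`a * expPast a f x`. -/
theorem mul_sq_expPast_le (ha : 0 < a) (hf : MemLp f 2) (x : ℝ) :
    a * expPast a f x ^ 2 ≤ expPast a (fun y => f y ^ 2) x := by
  have hint := integrableOn_expPast_integrand ha hf x
  have hint_sq : IntegrableOn (fun y => Real.exp (-(a * (x - y))) * f y ^ 2) (Set.Iic x) :=
    hf.integrable_sq.integrableOn.bdd_mul (c := 1) (by fun_prop) <|
      ae_restrict_of_forall_mem measurableSet_Iic fun y hy => by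
        simpa using mul_nonneg ha.le (sub_nonneg.2 hy)
  have expand : ∫ y in Set.Iic x, Real.exp (-(a * (x - y))) * (f y - a * expPast a f x) ^ 2 =
      expPast a (fun y => f y ^ 2) x - a * expPast a f x ^ 2 := by
    set m := a * expPast a f x with hm
    calc _ = ∫ y in Set.Iic x, (Real.exp (-(a * (x - y))) * f y ^ 2
            - 2 * m * (Real.exp (-(a * (x - y))) * f y) + m ^ 2 * Real.exp (-(a * (x - y)))) := by
          congr! 2 with y
          ring
      _ = expPast a (fun y => f y ^ 2) x - 2 * m * expPast a f x + m ^ 2 * (1 / a) := by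
          rw [integral_add, integral_sub hint_sq (hint.const_mul _), integral_const_mul,
            integral_const_mul, integral_exp_neg_mul_sub ha, expPast, expPast]
          exacts [hint_sq.sub (hint.const_mul _), (integrableOn_exp_neg_mul_sub ha x).const_mul _]
      _ = _ := by
          rw [hm]
          field_simp
          ring
  have hnonneg : 0 ≤ ∫ y in Set.Iic x, Real.exp (-(a * (x - y))) * (f y - a * expPast a f x) ^ 2 :=
    integral_nonneg fun y => by positivity
  linarith

theorem memLp_two_expPast (ha : 0 < a) (hfc : Continuous f) (hf : MemLp f 2) :
    MemLp (expPast a f) 2 := by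
  have hcont : Continuous (expPast a f) :=
    continuous_iff_continuousAt.2 fun x => (hasDerivAt_expPast ha hfc hf x).continuousAt
  rw [memLp_two_iff_integrable_sq hcont.aestronglyMeasurable]
  refine ((integrable_expPast ha hf.integrable_sq).const_mul a⁻¹).mono' (by fun_prop)
    (ae_of_all _ fun x => ?_)
  rw [Real.norm_of_nonneg (sq_nonneg _), ← div_eq_inv_mul, le_div_iff₀' ha]
  exact mul_sq_expPast_le ha hf x

theorem memLp_two_expFuture (ha : 0 < a) (hfc : Continuous f) (hf : MemLp f 2) :
    MemLp (expFuture a f) 2 := by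
  have hneg := Measure.measurePreserving_neg (volume : Measure ℝ)
  rw [expFuture_eq_expPast_comp_neg]
  exact (memLp_two_expPast ha (hfc.comp continuous_neg)
    (hf.comp_measurePreserving hneg)).comp_measurePreserving hneg

theorem convol_const_mul_exp_neg_abs (ha : 0 < a) (b : ℝ) (hf : MemLp f 2) :
    convol (fun z => b * Real.exp (-(a * |z|))) f =
      fun x => b * (expPast a f x + expFuture a f x) := by
  funext x
  have hpast : Set.EqOn (fun y => b * (Real.exp (-(a * (x - y))) * f y))
      (fun y => b * Real.exp (-(a * |x - y|)) * f y) (Set.Iic x) := fun y hy => by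
    simp only [abs_of_nonneg (sub_nonneg.2 (Set.mem_Iic.1 hy)), mul_assoc]
  have hfuture : Set.EqOn (fun y => b * (Real.exp (-(a * (y - x))) * f y))
      (fun y => b * Real.exp (-(a * |x - y|)) * f y) (Set.Ioi x) := fun y hy => by
    simp only [abs_of_neg (sub_neg.2 (Set.mem_Ioi.1 hy)), neg_sub, mul_assoc]
  have hpast_int := IntegrableOn.congr_fun
    ((integrableOn_expPast_integrand ha hf x).const_mul b) hpast measurableSet_Iic
  have hfuture_int := IntegrableOn.congr_fun
    ((integrableOn_expFuture_integrand ha hf x).const_mul b) hfuture measurableSet_Ioi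
  rw [convol, ← intervalIntegral.integral_Iic_add_Ioi hpast_int hfuture_int,
    ← setIntegral_congr_fun measurableSet_Iic hpast,
    ← setIntegral_congr_fun measurableSet_Ioi hfuture, integral_const_mul, integral_const_mul,
    ← mul_add, expPast, expFuture]

end ExponentialAverages

section Resolvents

variable {f : ℝ → ℝ}

theorem convol_pker_eq (hf : MemLp f 2) :
    convol pker f = fun x => 1 / 2 * (expPast 1 f x + expFuture 1 f x) := by
  have hpker : pker = fun z => 1 / 2 * Real.exp (-(1 * |z|)) := by
    simp only [funext_iff, pker, one_mul, implies_true]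
  rw [hpker]
  exact convol_const_mul_exp_neg_abs one_pos (1 / 2) hf

theorem convol_qker_eq (hf : MemLp f 2) :
    convol qker f = fun x => 1 / 4 * (expPast 2 f x + expFuture 2 f x) :=
  convol_const_mul_exp_neg_abs two_pos (1 / 4) hf

theorem memLp_two_convol_pker (hfc : Continuous f) (hf : MemLp f 2) :
    MemLp (convol pker f) 2 := by
  rw [convol_pker_eq hf]
  exact ((memLp_two_expPast one_pos hfc hf).add (memLp_two_expFuture one_pos hfc hf)).const_mul _

theorem memLp_two_convol_qker (hfc : Continuous f) (hf : MemLp f 2) :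
    MemLp (convol qker f) 2 := by
  rw [convol_qker_eq hf]
  exact ((memLp_two_expPast two_pos hfc hf).add (memLp_two_expFuture two_pos hfc hf)).const_mul _

theorem continuous_convol_qker (hfc : Continuous f) (hf : MemLp f 2) :
    Continuous (convol qker f) := by
  rw [convol_qker_eq hf]
  exact continuous_iff_continuousAt.2 fun x => (((hasDerivAt_expPast two_pos hfc hf x).add
    (hasDerivAt_expFuture two_pos hfc hf x)).const_mul _).continuousAt

theorem hasDerivAt_convol_pker (hfc : Continuous f) (hf : MemLp f 2) (x : ℝ) :
    HasDerivAt (convol pker f) (1 / 2 * (expFuture 1 f x - expPast 1 f x)) x := by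
  rw [convol_pker_eq hf]
  refine (((hasDerivAt_expPast one_pos hfc hf x).add
    (hasDerivAt_expFuture one_pos hfc hf x)).const_mul (1 / 2)).congr_deriv ?_
  ring

theorem deriv_convol_pker (hfc : Continuous f) (hf : MemLp f 2) :
    deriv (convol pker f) = fun x => 1 / 2 * (expFuture 1 f x - expPast 1 f x) :=
  funext fun x => (hasDerivAt_convol_pker hfc hf x).deriv

theorem memLp_two_deriv_convol_pker (hfc : Continuous f) (hf : MemLp f 2) :
    MemLp (deriv (convol pker f)) 2 := by
  rw [deriv_convol_pker hfc hf]
  exact ((memLp_two_expFuture one_pos hfc hf).sub (memLp_two_expPast one_pos hfc hf)).const_mul _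

theorem hasDerivAt_deriv_convol_pker (hfc : Continuous f) (hf : MemLp f 2) (x : ℝ) :
    HasDerivAt (deriv (convol pker f)) (convol pker f x - f x) x := by
  rw [deriv_convol_pker hfc hf, convol_pker_eq hf]
  refine (((hasDerivAt_expFuture one_pos hfc hf x).sub
    (hasDerivAt_expPast one_pos hfc hf x)).const_mul (1 / 2)).congr_deriv ?_
  ring

theorem deriv_deriv_convol_pker (hfc : Continuous f) (hf : MemLp f 2) :
    deriv (deriv (convol pker f)) = fun x => convol pker f x - f x :=
  funext fun x => (hasDerivAt_deriv_convol_pker hfc hf x).deriv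

end Resolvents

section WeightedEnergy

variable {X : Type*} [MeasurableSpace X] {μ : Measure X} {r r' r'' w w'' : X → ℝ} {c : ℝ}

theorem integrable_weighted_energy (hr : MemLp r 2 μ) (hr' : MemLp r' 2 μ)
    (hr'' : MemLp r'' 2 μ) (hw : MemLp w ∞ μ) :
    Integrable (fun x => (r x ^ 2 + 2 * r' x ^ 2 + r'' x ^ 2) * w x) μ :=
  ((hr.integrable_sq.add (hr'.integrable_sq.const_mul 2)).add hr''.integrable_sq).mul_of_top_left hw

theorem one_sub_mul_integral_sq_mul_le (hr : MemLp r 2 μ) (hr' : MemLp r' 2 μ)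
    (hr'' : MemLp r'' 2 μ) (hw : MemLp w ∞ μ) (hw'' : MemLp w'' ∞ μ)
    (hw_nonneg : ∀ x, 0 ≤ w x) (hw''_le : ∀ x, w'' x ≤ c * w x) :
    (1 - c) * ∫ x, r x ^ 2 * w x ∂μ ≤
      (∫ x, (r x ^ 2 + 2 * r' x ^ 2 + r'' x ^ 2) * w x ∂μ) - ∫ x, r x ^ 2 * w'' x ∂μ := by
  have hmass : Integrable (fun x => r x ^ 2 * w x) μ := hr.integrable_sq.mul_of_top_left hw
  have henergy :
      ∫ x, r x ^ 2 * w x ∂μ ≤ ∫ x, (r x ^ 2 + 2 * r' x ^ 2 + r'' x ^ 2) * w x ∂μ := by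
    refine integral_mono hmass (integrable_weighted_energy hr hr' hr'' hw) fun x => ?_
    refine mul_le_mul_of_nonneg_right ?_ (hw_nonneg x)
    linarith [sq_nonneg (r' x), sq_nonneg (r'' x)]
  have hcurv : ∫ x, r x ^ 2 * w'' x ∂μ ≤ c * ∫ x, r x ^ 2 * w x ∂μ := by
    rw [← integral_const_mul]
    refine integral_mono (hr.integrable_sq.mul_of_top_left hw'') (hmass.const_mul c) fun x => ?_
    linarith [mul_le_mul_of_nonneg_left (hw''_le x) (sq_nonneg (r x))]
  linarith

end WeightedEnergy

theorem integral_sq_sub_mul_eq {r r' r'' w w' w'' : ℝ → ℝ}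
    (hr : MemLp r 2) (hr' : MemLp r' 2) (hr'' : MemLp r'' 2)
    (hw : MemLp w ∞) (hw' : MemLp w' ∞) (hw'' : MemLp w'' ∞)
    (hdr : ∀ x, HasDerivAt r (r' x) x) (hdr' : ∀ x, HasDerivAt r' (r'' x) x)
    (hdw : ∀ x, HasDerivAt w (w' x) x) (hdw' : ∀ x, HasDerivAt w' (w'' x) x) :
    ∫ x, (r x - r'' x) ^ 2 * w x =
      (∫ x, (r x ^ 2 + 2 * r' x ^ 2 + r'' x ^ 2) * w x) - ∫ x, r x ^ 2 * w'' x := by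
  have hflux : ∀ x, HasDerivAt (fun x => 2 * (r x * r' x * w x) - r x ^ 2 * w' x)
      ((r x ^ 2 + 2 * r' x ^ 2 + r'' x ^ 2) * w x - r x ^ 2 * w'' x
        - (r x - r'' x) ^ 2 * w x) x := by
    intro x
    refine (((((hdr x).mul (hdr' x)).mul (hdw x)).const_mul 2).sub
      (((hdr x).pow 2).mul (hdw' x))).congr_deriv ?_
    simp only [Pi.mul_apply, Pi.pow_apply]
    push_cast
    ring
  have henergy := integrable_weighted_energy hr hr' hr'' hw
  have hcurv : Integrable fun x => r x ^ 2 * w'' x := hr.integrable_sq.mul_of_top_left hw''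
  have hsource : Integrable fun x => (r x - r'' x) ^ 2 * w x :=
    (hr.sub hr'').integrable_sq.mul_of_top_left hw
  have hflux_int : Integrable fun x => 2 * (r x * r' x * w x) - r x ^ 2 * w' x :=
    (((hr.integrable_mul hr').mul_of_top_left hw).const_mul 2).sub
      (hr.integrable_sq.mul_of_top_left hw')
  have hzero := integral_eq_zero_of_hasDerivAt_of_integrable hflux
    ((henergy.sub hcurv).sub hsource) hflux_int
  rw [integral_sub (by exact henergy.sub hcurv) hsource, integral_sub henergy hcurv] at hzero
  exact (sub_eq_zero.1 hzero).symm

theorem stmt_18_general {ψ f : ℝ → ℝ} {c : ℝ} (hψ : ContDiff ℝ 3 ψ)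
    (hbdd : ∀ k ∈ ({1, 2, 3} : Set ℕ), MemLp (iteratedDeriv k ψ) ∞)
    (hψ'_nonneg : ∀ x, 0 ≤ deriv ψ x) (hψ'''_le : ∀ x, iteratedDeriv 3 ψ x ≤ c * deriv ψ x)
    (hfc : Continuous f) (hf : MemLp f 2) :
    (∫ x, f x ^ 2 * deriv ψ x)
      = (∫ x, (convol pker f x ^ 2 + 2 * deriv (convol pker f) x ^ 2
          + deriv (deriv (convol pker f)) x ^ 2) * deriv ψ x)
        - (∫ x, convol pker f x ^ 2 * iteratedDeriv 3 ψ x) ∧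
    (1 - c) * (∫ x, convol pker f x ^ 2 * deriv ψ x) ≤ ∫ x, f x ^ 2 * deriv ψ x := by
  have hdψ : ∀ k < 3, ∀ x, HasDerivAt (iteratedDeriv k ψ) (iteratedDeriv (k + 1) ψ x) x := by
    intro k hk x
    rw [iteratedDeriv_succ]
    exact (hψ.differentiable_iteratedDeriv k (by exact_mod_cast hk) x).hasDerivAt
  have hr := memLp_two_convol_pker hfc hf
  have hr' := memLp_two_deriv_convol_pker hfc hf
  have hr'' : MemLp (fun x => convol pker f x - f x) 2 := hr.sub hf
  have hw := hbdd 1 (by simp)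
  have hw'' := hbdd 3 (by simp)
  simp only [deriv_deriv_convol_pker hfc hf, ← iteratedDeriv_one (f := ψ)] at hψ'_nonneg hψ'''_le ⊢
  have hidentity := integral_sq_sub_mul_eq hr hr' hr'' hw (hbdd 2 (by simp)) hw''
    (fun x => (hasDerivAt_convol_pker hfc hf x).differentiableAt.hasDerivAt)
    (hasDerivAt_deriv_convol_pker hfc hf) (hdψ 1 (by norm_num)) (hdψ 2 (by norm_num))
  simp only [sub_sub_cancel] at hidentity
  refine ⟨hidentity, ?_⟩
  rw [hidentity]
  exact one_sub_mul_integral_sq_mul_le hr hr' hr'' hw hw'' hψ'_nonneg hψ'''_le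

/-- weighted coercivity identity.  For a positive weight `ψ'` with
`|ψ'''| ≤ ψ'/B²` and Schwartz `u`, setting `û = q*u` and `r = p*û`,
`∫ û² ψ' = ∫ (r² + 2r'² + r''²)ψ' - ∫ r² ψ'''`, whence
`∫ û² ψ' ≥ (1 - 1/B²)∫ r² ψ'`. -/
theorem stmt_18 (B : ℝ) (hB : 1 < B) (ψ : ℝ → ℝ) (hψ : ContDiff ℝ (⊤ : ℕ∞) ψ)
    (hdecay : ∀ k ∈ ({1, 2, 3, 5} : Set ℕ),
      Tendsto (iteratedDeriv k ψ) (Filter.cocompact ℝ) (nhds 0))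
    (hψ'pos : ∀ x, 0 < deriv ψ x)
    (hψ''' : ∀ x, |iteratedDeriv 3 ψ x| ≤ (1/B^2) * deriv ψ x)
    (u : SchwartzMap ℝ ℝ) :
    (∫ x, (convol qker ⇑u x)^2 * deriv ψ x)
      = (∫ x, ((convol pker (convol qker ⇑u) x)^2
          + 2 * (deriv (convol pker (convol qker ⇑u)) x)^2
          + (deriv (deriv (convol pker (convol qker ⇑u))) x)^2) * deriv ψ x)
        - (∫ x, (convol pker (convol qker ⇑u) x)^2 * iteratedDeriv 3 ψ x) ∧
    (1 - 1/B^2) * (∫ x, (convol pker (convol qker ⇑u) x)^2 * deriv ψ x)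
      ≤ ∫ x, (convol qker ⇑u x)^2 * deriv ψ x :=
  stmt_18_general (contDiff_infty.1 hψ 3)
    (fun k hk => memLp_top_of_tendsto_cocompact
      ((contDiff_infty.1 hψ k).continuous_iteratedDeriv' k) (hdecay k (by grind)))
    (fun x => (hψ'pos x).le) (fun x => (le_abs_self _).trans (hψ''' x))
    (continuous_convol_qker u.continuous (u.memLp 2))
    (memLp_two_convol_qker u.continuous (u.memLp 2))
end
end
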